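/- Let n ≥ 3. There exist constants ε₀ ∈ (0,1) and a₅ > 0, depending only on n, such that for every smooth ℤⁿ-periodic real-valued eigenfunction ψ : ℝⁿ → ℝ of the Euclidean Laplacian with eigenvalue λ ≥ 1, ψ not identically zero, every nodal domain Ω of ψ satisfies in(Ω) ≥ a₅ λ^{-1/2} · N(λ)^{-(n-1)(n-2)/(2n)}, where N(λ) = sup{ log( sup_{B_{2s}(x)} ψ² / sup_{B_s(x)} ψ² ) : x ∈ ℝⁿ, 0 < s ≤ ε₀ λ^{-1/2} }. -/

import Mathlib

open MeasureTheory Metric Filter Real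

noncomputable section

/-- `ψ : ℝⁿ → ℝ` is `ℤⁿ`-periodic: `ψ (x + v) = ψ x` for every integer vector `v`. -/
def ZnPeriodic (n : ℕ) (ψ : EuclideanSpace ℝ (Fin n) → ℝ) : Prop :=
  ∀ (x : EuclideanSpace ℝ (Fin n)) (v : Fin n → ℤ),
    ψ (show EuclideanSpace ℝ (Fin n) from WithLp.toLp 2 fun i => x i + (v i : ℝ)) = ψ x

/-- The Euclidean Laplacian `Δψ = ∑ᵢ ∂²ψ/∂xᵢ²`. -/
def lap (n : ℕ) (ψ : EuclideanSpace ℝ (Fin n) → ℝ) (x : EuclideanSpace ℝ (Fin n)) : ℝ :=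
  ∑ i : Fin n,
    fderiv ℝ (fun y => fderiv ℝ ψ y (EuclideanSpace.single i (1:ℝ))) x
      (EuclideanSpace.single i (1:ℝ))

/-- `Ω` is a nodal domain of `ψ`: a connected component of `{ψ ≠ 0}`. -/
def IsNodalDomain {n : ℕ} (ψ : EuclideanSpace ℝ (Fin n) → ℝ)
    (Ω : Set (EuclideanSpace ℝ (Fin n))) : Prop :=
  ∃ x, ψ x ≠ 0 ∧ Ω = connectedComponentIn {y | ψ y ≠ 0} x

/-- The inner radius of a set: the supremum of radii of open balls contained in it. -/
def innerRadius {n : ℕ} (Ω : Set (EuclideanSpace ℝ (Fin n))) : ℝ :=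
  sSup {ρ : ℝ | 0 < ρ ∧ ∃ c, Metric.ball c ρ ⊆ Ω}

/-- The fundamental domain `[0,1)ⁿ` of the torus `ℝⁿ/ℤⁿ`. -/
def fundDom (n : ℕ) : Set (EuclideanSpace ℝ (Fin n)) :=
  {x | ∀ i, x i ∈ Set.Ico (0:ℝ) 1}

/-- `S ⊆ ℕ` has full density: `#(S ∩ [1,N]) / N → 1`. -/
def FullDensity (S : Set ℕ) : Prop :=
  Filter.Tendsto (fun N => (Nat.card ↥(S ∩ Set.Icc 1 N) : ℝ) / N) Filter.atTop (nhds 1)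


/-!
Let `r` be slightly larger than the inner radius of `Ω`, on which `ψ` is positive, let `N` bound the
doubling index, and let `y ∈ ∂Ω` be a boundary point within `r` of a point `x₀` at which `ψ` nearly
attains its supremum over `Ω`. Since `ψ` vanishes at `y`, Harnack's inequality and doubling bound
`max_{B(y, 2r)} (-ψ)` by `e^{O(N)} max_{B(y, r)} (-ψ)`. Cut the shell between these balls into `J`
shells of width `r / J`, with `J` a large multiple of `N`. Across at least half of them the maximum
of `-ψ` grows by a factor close to `1`, and Harnack's inequality again yields a ball of radius
`r / (4J)`, centred in that shell, on which `ψ` is negative. So about `J` disjoint balls of radius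
comparable to `r / J` lie outside `Ω`, near `x₀`.

Let `u` be the sum of the fundamental solutions with poles at the centres of these balls. On `Ω` it
is at most `U ≈ (r / J)^{2 - n} log J`, the logarithm coming from `n = 3`, whereas `u(x₀)` is at
least of order `J r^{2 - n}` and exceeds `u` on `∂B(x₀, 9r)` by a fixed factor. If `λ r² U` were
much smaller than `J r^{2 - n}`, the function `ψ + (ψ(x₀) / 2U) u + λ ψ(x₀) |· - x₀|²`, which is
subharmonic on `Ω ∩ B(x₀, 9r)`, would violate the maximum principle. Therefore
`J^{3 - n} / log J ≲ λ r²`, and `r ≳ λ^{-1/2} N^{-e}` for every `e > (n - 3) / 2`. The exponent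
`(n - 1)(n - 2) / (2n)` equals `(n - 3) / 2 + 1 / n`.
-/

open Set Topology InnerProductSpace Laplacian Module

section Laplacian

lemma deriv_deriv_nonpos_of_isLocalMax {f : ℝ → ℝ} {a : ℝ} (hf : ContinuousAt f a)
    (hmax : IsLocalMax f a) : deriv (deriv f) a ≤ 0 := by
  by_contra! hpos
  have hmin : IsLocalMin f a := isLocalMin_of_deriv_deriv_pos hpos hmax.deriv_eq_zero hf
  have hconst : f =ᶠ[𝓝 a] fun _ => f a := by
    filter_upwards [hmax, hmin] with t h₁ h₂ using le_antisymm h₁ h₂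
  have hzero : deriv f =ᶠ[𝓝 a] fun _ => 0 := by simpa using hconst.deriv
  simp [hzero.deriv_eq] at hpos

lemma deriv_deriv_comp_quadratic {φ : ℝ → ℝ} {A : ℝ} (hφ : ContDiffAt ℝ 2 φ A) (b : ℝ) :
    deriv (deriv fun t : ℝ => φ (A + 2 * b * t + t ^ 2)) 0
      = 4 * b ^ 2 * deriv (deriv φ) A + 2 * deriv φ A := by
  have hquad (t : ℝ) : HasDerivAt (fun t : ℝ => A + 2 * b * t + t ^ 2) (2 * b + 2 * t) t := by
    simpa using (((hasDerivAt_id t).const_mul (2 * b)).const_add A).fun_add (hasDerivAt_pow 2 t)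
  have htendsto : Tendsto (fun t : ℝ => A + 2 * b * t + t ^ 2) (𝓝 0) (𝓝 A) := by
    simpa using (hquad 0).continuousAt.tendsto
  have hdiff : ∀ᶠ s in 𝓝 A, DifferentiableAt ℝ φ s :=
    (hφ.eventually (by simp)).mono fun x hx => hx.differentiableAt (by simp)
  have hderiv : deriv (fun t : ℝ => φ (A + 2 * b * t + t ^ 2)) =ᶠ[𝓝 0]
      fun t => deriv φ (A + 2 * b * t + t ^ 2) * (2 * b + 2 * t) :=
    (htendsto.eventually hdiff).mono fun t ht => (ht.hasDerivAt.comp t (hquad t)).deriv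
  have hφ' : HasDerivAt (deriv φ) (deriv (deriv φ) A) (A + 2 * b * 0 + 0 ^ 2) := by
    simpa using ((hφ.derivWithin (m := 1) (by norm_num)).differentiableAt (by simp)).hasDerivAt
  have hlin : HasDerivAt (fun t : ℝ => 2 * b + 2 * t) 2 0 := by
    simpa using ((hasDerivAt_id (0 : ℝ)).const_mul 2).const_add (2 * b)
  rw [hderiv.deriv_eq]
  refine ((hφ'.comp (0 : ℝ) (hquad 0)).fun_mul hlin).deriv.trans ?_
  simp only [Function.comp_def, mul_zero, add_zero, ne_eq, OfNat.ofNat_ne_zero, not_false_eq_true,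
    zero_pow]
  ring

variable {E : Type*} [NormedAddCommGroup E] [InnerProductSpace ℝ E]

lemma hasDerivAt_comp_line {f : E → ℝ} {p e : E} {t : ℝ} (hf : DifferentiableAt ℝ f (p + t • e)) :
    HasDerivAt (fun s : ℝ => f (p + s • e)) (fderiv ℝ f (p + t • e) e) t := by
  have hline : HasDerivAt (fun s : ℝ => p + s • e) e t := by
    simpa using ((hasDerivAt_id t).smul_const e).const_add p
  exact hf.hasFDerivAt.comp_hasDerivAt t hline

lemma deriv_deriv_comp_line {f : E → ℝ} {p : E} (hf : ContDiffAt ℝ 2 f p) (e : E) :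
    deriv (deriv fun t : ℝ => f (p + t • e)) 0 = iteratedFDeriv ℝ 2 f p ![e, e] := by
  have htendsto : Tendsto (fun t : ℝ => p + t • e) (𝓝 0) (𝓝 p) := by
    have hcont : Continuous fun t : ℝ => p + t • e := by fun_prop
    simpa using hcont.tendsto 0
  have hdiff : ∀ᶠ x in 𝓝 p, DifferentiableAt ℝ f x :=
    (hf.eventually (by simp)).mono fun x hx => hx.differentiableAt (by simp)
  have hderiv : deriv (fun t : ℝ => f (p + t • e)) =ᶠ[𝓝 0] fun t => fderiv ℝ f (p + t • e) e :=
    (htendsto.eventually hdiff).mono fun t ht => (hasDerivAt_comp_line ht).deriv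
  have hfderiv : DifferentiableAt ℝ (fderiv ℝ f) (p + (0 : ℝ) • e) := by
    simpa using (hf.fderiv_right (m := 1) (by norm_num)).differentiableAt (by simp)
  have hline := hfderiv.hasFDerivAt.comp_hasDerivAt (f := fun t : ℝ => p + t • e) (0 : ℝ)
    (by simpa using ((hasDerivAt_id (0 : ℝ)).smul_const e).const_add p)
  rw [hderiv.deriv_eq, iteratedFDeriv_two_apply]
  simpa [Function.comp_def] using (hline.clm_apply (hasDerivAt_const (0 : ℝ) e)).deriv

lemma norm_add_smul_sub_sq {e : E} (he : ‖e‖ = 1) (p a : E) (t : ℝ) :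
    ‖p + t • e - a‖ ^ 2 = ‖p - a‖ ^ 2 + 2 * ⟪p - a, e⟫_ℝ * t + t ^ 2 := by
  rw [add_sub_right_comm, norm_add_sq_real, norm_smul, inner_smul_right, he, mul_one,
    Real.norm_eq_abs, sq_abs]
  ring

lemma contDiff_norm_sub_sq (a : E) {k : WithTop ℕ∞} : ContDiff ℝ k fun x => ‖x - a‖ ^ 2 :=
  (contDiff_id.sub contDiff_const).norm_sq ℝ

variable [FiniteDimensional ℝ E]

lemma laplacian_eq_sum_deriv_deriv {ι : Type*} [Fintype ι] {f : E → ℝ} {p : E}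
    (hf : ContDiffAt ℝ 2 f p) (v : OrthonormalBasis ι ℝ E) :
    Δ f p = ∑ i, deriv (deriv fun t : ℝ => f (p + t • v i)) 0 := by
  rw [laplacian_eq_iteratedFDeriv_orthonormalBasis f v]
  exact Finset.sum_congr rfl fun i _ => (deriv_deriv_comp_line hf _).symm

lemma continuous_laplacian {f : E → ℝ} (hf : ContDiff ℝ 2 f) : Continuous (Δ f) := by
  rw [laplacian_eq_iteratedFDeriv_stdOrthonormalBasis]
  have := hf.continuous_iteratedFDeriv (m := 2) le_rfl
  fun_prop

lemma laplacian_nonpos_of_isLocalMax {f : E → ℝ} {p : E} (hf : ContDiffAt ℝ 2 f p)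
    (hmax : IsLocalMax f p) : Δ f p ≤ 0 := by
  rw [laplacian_eq_sum_deriv_deriv hf (stdOrthonormalBasis ℝ E)]
  refine Finset.sum_nonpos fun i _ => ?_
  have hline : Continuous fun t : ℝ => p + t • stdOrthonormalBasis ℝ E i := by fun_prop
  apply deriv_deriv_nonpos_of_isLocalMax
  · exact ContinuousAt.comp' (by simpa using hf.continuousAt) hline.continuousAt
  · exact IsLocalMax.comp_continuous (by simpa using hmax) hline.continuousAt

lemma laplacian_comp_norm_sub_sq {φ : ℝ → ℝ} {a p : E} (hφ : ContDiffAt ℝ 2 φ (‖p - a‖ ^ 2)) :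
    Δ (fun x => φ (‖x - a‖ ^ 2)) p = 4 * ‖p - a‖ ^ 2 * deriv (deriv φ) (‖p - a‖ ^ 2)
      + 2 * finrank ℝ E * deriv φ (‖p - a‖ ^ 2) := by
  have hcomp : ContDiffAt ℝ 2 (fun x => φ (‖x - a‖ ^ 2)) p :=
    hφ.comp (f := fun x => ‖x - a‖ ^ 2) p (contDiff_norm_sub_sq a).contDiffAt
  have hb (i) : ‖stdOrthonormalBasis ℝ E i‖ = 1 := (stdOrthonormalBasis ℝ E).orthonormal.1 i
  rw [laplacian_eq_sum_deriv_deriv hcomp (stdOrthonormalBasis ℝ E)]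
  simp_rw [norm_add_smul_sub_sq (hb _), deriv_deriv_comp_quadratic hφ]
  rw [Finset.sum_add_distrib, ← Finset.sum_mul, ← Finset.mul_sum,
    OrthonormalBasis.sum_sq_inner_left]
  simp only [Finset.sum_const, Finset.card_univ, Fintype.card_fin, nsmul_eq_mul]
  ring

lemma laplacian_norm_sub_sq (a p : E) : Δ (fun x => ‖x - a‖ ^ 2) p = 2 * finrank ℝ E := by
  simpa using laplacian_comp_norm_sub_sq (φ := id) (a := a) (p := p) contDiffAt_id

lemma laplacian_sq_sub_norm_sub_sq (a p : E) (A : ℝ) :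
    Δ (fun x => (A - ‖x - a‖ ^ 2) ^ 2) p =
      8 * ‖p - a‖ ^ 2 - 4 * finrank ℝ E * (A - ‖p - a‖ ^ 2) := by
  have hderiv : deriv (fun t : ℝ => (A - t) ^ 2) = fun t => -(2 * (A - t)) := by
    ext t
    simpa using (((hasDerivAt_id t).const_sub A).fun_pow 2).deriv
  rw [laplacian_comp_norm_sub_sq (φ := fun t => (A - t) ^ 2) (by fun_prop), hderiv]
  simp
  ring

lemma laplacian_norm_sub_rpow {a p : E} (hp : p ≠ a) :
    Δ (fun x => ‖x - a‖ ^ (2 - (finrank ℝ E : ℝ))) p = 0 := by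
  set γ : ℝ := (2 - (finrank ℝ E : ℝ)) / 2 with hγ
  have hnorm : 0 < ‖p - a‖ := norm_sub_pos_iff.2 hp
  have hpos : 0 < ‖p - a‖ ^ 2 := by positivity
  have hdim : (finrank ℝ E : ℝ) = 2 - 2 * γ := by rw [hγ]; ring
  have hpow : (fun x => ‖x - a‖ ^ (2 - (finrank ℝ E : ℝ))) = fun x => (‖x - a‖ ^ 2) ^ γ := by
    ext x
    rw [← Real.rpow_natCast, ← Real.rpow_mul (norm_nonneg _), hγ]
    congr 1
    push_cast
    ring
  rw [hpow, laplacian_comp_norm_sub_sq (φ := fun s => s ^ γ)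
    (Real.contDiffAt_rpow_const_of_ne hpos.ne')]
  simp only [Real.deriv_rpow_const', deriv_const_mul_field']
  rw [Real.rpow_sub_one hpos.ne' (γ - 1), hdim]
  field_simp
  ring

end Laplacian

lemma lap_eq_laplacian {n : ℕ} {ψ : EuclideanSpace ℝ (Fin n) → ℝ} (hψ : ContDiff ℝ 2 ψ) :
    lap n ψ = Δ ψ := by
  rw [laplacian_eq_iteratedFDeriv_orthonormalBasis ψ (EuclideanSpace.basisFun (Fin n) ℝ)]
  ext x
  refine Finset.sum_congr rfl fun i _ => ?_
  have hfderiv : DifferentiableAt ℝ (fderiv ℝ ψ) x :=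
    (hψ.fderiv_right (m := 1) (by norm_num)).differentiable (by simp) x
  rw [iteratedFDeriv_two_apply, fderiv_clm_apply hfderiv (by fun_prop)]
  simp

section MaximumPrinciple

variable {E : Type*} [NormedAddCommGroup E] [InnerProductSpace ℝ E] [FiniteDimensional ℝ E]

lemma exists_mem_sphere_le_of_laplacian_pos {Ω : Set E} (hΩ : IsOpen Ω) {f : E → ℝ} {c x₀ : E}
    {ρ : ℝ} (hx₀ : x₀ ∈ Ω ∩ closedBall c ρ) (hf : ContinuousOn f (closure Ω ∩ closedBall c ρ))
    (hf₂ : ∀ p ∈ Ω ∩ ball c ρ, ContDiffAt ℝ 2 f p) (hΔ : ∀ p ∈ Ω ∩ ball c ρ, 0 < Δ f p)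
    (hfrontier : ∀ p ∈ frontier Ω ∩ closedBall c ρ, f p < f x₀) :
    ∃ p ∈ Ω ∩ sphere c ρ, f x₀ ≤ f p := by
  obtain ⟨p, ⟨hpΩ, hpc⟩, hmax⟩ :=
    ((isCompact_closedBall c ρ).inter_left isClosed_closure).exists_isMaxOn
      ⟨x₀, subset_closure hx₀.1, hx₀.2⟩ hf
  have hle : f x₀ ≤ f p := hmax ⟨subset_closure hx₀.1, hx₀.2⟩
  have hp : p ∈ Ω := by
    by_contra hp
    exact (hfrontier p ⟨⟨hpΩ, by rwa [hΩ.interior_eq]⟩, hpc⟩).not_ge hle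
  refine ⟨p, ⟨hp, ?_⟩, hle⟩
  by_contra hsphere
  have hball : p ∈ Ω ∩ ball c ρ := ⟨hp, lt_of_le_of_ne hpc hsphere⟩
  have hlocal : IsLocalMax f p := by
    filter_upwards [(hΩ.inter isOpen_ball).mem_nhds hball] with z hz
    exact hmax ⟨subset_closure hz.1, ball_subset_closedBall hz.2⟩
  exact (hΔ p hball).not_ge (laplacian_nonpos_of_isLocalMax (hf₂ p hball) hlocal)

lemma exists_mem_sphere_le_add_of_neg_le_laplacian [Nontrivial E] {f : E → ℝ}
    (hf : ContDiff ℝ 2 f) {c p : E} {t μ : ℝ} (hμ : 0 < μ) (hp : p ∈ closedBall c t)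
    (hΔ : ∀ z ∈ ball c t, -μ ≤ Δ f z) :
    ∃ x ∈ sphere c t, f p ≤ f x + μ / finrank ℝ E * t ^ 2 := by
  have hd : (0 : ℝ) < finrank ℝ E := by exact_mod_cast finrank_pos
  have hquad : ContDiff ℝ 2 ((μ / finrank ℝ E) • fun x => ‖x - c‖ ^ 2) :=
    contDiff_const.smul (contDiff_norm_sub_sq c)
  obtain ⟨x, ⟨-, hx⟩, hle⟩ := exists_mem_sphere_le_of_laplacian_pos isOpen_univ
    (f := f + (μ / finrank ℝ E) • fun x => ‖x - c‖ ^ 2) ⟨mem_univ p, hp⟩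
    (hf.add hquad).continuous.continuousOn (fun _ _ => (hf.add hquad).contDiffAt) (fun z hz => by
      rw [hf.contDiffAt.laplacian_add hquad.contDiffAt,
        laplacian_smul _ (contDiff_norm_sub_sq c).contDiffAt, laplacian_norm_sub_sq]
      have : (μ / finrank ℝ E) • (2 * (finrank ℝ E : ℝ)) = 2 * μ := by
        rw [smul_eq_mul]; field_simp
      linarith [hΔ z hz.2]) (by simp)
  refine ⟨x, hx, ?_⟩
  simp only [Pi.add_apply, Pi.smul_apply, smul_eq_mul, mem_sphere_iff_norm.1 hx] at hle
  have : 0 ≤ μ / finrank ℝ E * ‖p - c‖ ^ 2 := by positivity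
  linarith

end MaximumPrinciple

section BallAverage

lemma hasDerivAt_max_zero_sq (t : ℝ) :
    HasDerivAt (fun s : ℝ => max s 0 ^ 2) (2 * max t 0) t := by
  refine hasDerivAt_of_hasDerivAt_of_ne' (x := 0) (g := fun s => 2 * max s 0) (fun s hs => ?_)
    (by fun_prop) (by fun_prop) t
  rcases hs.lt_or_gt with hneg | hpos
  · have heq : (fun s : ℝ => max s 0 ^ 2) =ᶠ[𝓝 s] fun _ => 0 := by
      filter_upwards [gt_mem_nhds hneg] with u hu
      simp [max_eq_right hu.le]
    simpa [max_eq_right hneg.le] using (hasDerivAt_const s (0 : ℝ)).congr_of_eventuallyEq heq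
  · have heq : (fun s : ℝ => max s 0 ^ 2) =ᶠ[𝓝 s] fun s => s ^ 2 := by
      filter_upwards [lt_mem_nhds hpos] with u hu
      simp [max_eq_left hu.le]
    simpa [max_eq_left hpos.le] using (hasDerivAt_pow 2 s).congr_of_eventuallyEq heq

variable {E : Type*} [NormedAddCommGroup E]

/-- The truncated paraboloid `(1 - ‖z‖²)₊`, the weight of the averages below. It is chosen for the
identity `∇(w²) = -4 z w`, which turns the derivative of an average in the radius into an average
of the Laplacian with the nonnegative weight `w²`. -/
def ballWeight (z : E) : ℝ := max (1 - ‖z‖ ^ 2) 0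

@[fun_prop]
lemma continuous_ballWeight : Continuous (ballWeight (E := E)) := by
  unfold ballWeight
  fun_prop

lemma ballWeight_nonneg (z : E) : 0 ≤ ballWeight z := le_max_right _ _

lemma ballWeight_le_one (z : E) : ballWeight z ≤ 1 :=
  max_le (by nlinarith [sq_nonneg ‖z‖]) zero_le_one

lemma ballWeight_sq_le (z : E) : ballWeight z ^ 2 ≤ ballWeight z :=
  pow_le_of_le_one (ballWeight_nonneg z) (ballWeight_le_one z) two_ne_zero

lemma ballWeight_eq_zero {z : E} (hz : 1 ≤ ‖z‖) : ballWeight z = 0 :=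
  max_eq_right (by nlinarith)

variable [InnerProductSpace ℝ E]

lemma add_smul_mem_ball {x z : E} {δ : ℝ} (hδ : 0 < δ) (hz : ‖z‖ < 1) : x + δ • z ∈ ball x δ := by
  rw [mem_ball_iff_norm, add_sub_cancel_left, norm_smul, Real.norm_of_nonneg hδ.le]
  exact mul_lt_of_lt_one_right hδ hz

lemma hasFDerivAt_ballWeight_sq (z : E) :
    HasFDerivAt (fun z : E => ballWeight z ^ 2) ((-4 * ballWeight z) • innerSL ℝ z) z := by
  have hpara : HasFDerivAt (fun z : E => 1 - ‖z‖ ^ 2) (-((2 : ℕ) • innerSL ℝ z)) z := by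
    simpa using (hasStrictFDerivAt_norm_sq z).hasFDerivAt.const_sub 1
  refine ((hasDerivAt_max_zero_sq (1 - ‖z‖ ^ 2)).comp_hasFDerivAt z hpara).congr_fderiv ?_
  rw [ballWeight]
  module

variable [FiniteDimensional ℝ E]

lemma hasCompactSupport_ballWeight : HasCompactSupport (ballWeight (E := E)) :=
  HasCompactSupport.of_support_subset_isCompact (isCompact_closedBall 0 1) fun z hz => by
    by_contra h
    exact hz (ballWeight_eq_zero (by simpa using (not_le.1 fun h' => h (by simpa using h')).le))

variable [MeasurableSpace E] [BorelSpace E]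

lemma integrable_mul_ballWeight {f : E → ℝ} (hf : Continuous f) :
    Integrable fun z => f z * ballWeight z :=
  (hf.mul continuous_ballWeight).integrable_of_hasCompactSupport
    hasCompactSupport_ballWeight.mul_left

lemma integrable_mul_ballWeight_sq {f : E → ℝ} (hf : Continuous f) :
    Integrable fun z => f z * ballWeight z ^ 2 := by
  simpa only [pow_two, mul_assoc] using
    integrable_mul_ballWeight (f := fun z => f z * ballWeight z) (hf.mul continuous_ballWeight)

lemma integrable_ballWeight : Integrable (ballWeight (E := E)) := by
  simpa using integrable_mul_ballWeight (E := E) (continuous_const (y := (1 : ℝ)))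

lemma integral_ballWeight_pos : 0 < ∫ z : E, ballWeight z := by
  refine (integral_pos_iff_support_of_nonneg ballWeight_nonneg integrable_ballWeight).2 ?_
  exact continuous_ballWeight.isOpen_support.measure_pos _ ⟨0, by simp [ballWeight]⟩

lemma integral_fderiv_mul_inner_ballWeight {f : E → ℝ} (hf : ContDiff ℝ 2 f) (x e : E) (δ : ℝ) :
    ∫ z, fderiv ℝ f (x + δ • z) e * (⟪z, e⟫_ℝ * ballWeight z)
      = δ / 4 * ∫ z, iteratedFDeriv ℝ 2 f (x + δ • z) ![e, e] * ballWeight z ^ 2 := by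
  have hf' : ContDiff ℝ 1 (fderiv ℝ f) := hf.fderiv_right (by norm_num)
  have hu (z : E) : HasFDerivAt (fun z => fderiv ℝ f (x + δ • z) e)
      (δ • (fderiv ℝ (fderiv ℝ f) (x + δ • z)).flip e) z := by
    have hdilate : HasFDerivAt (fun z : E => x + δ • z) (δ • ContinuousLinearMap.id ℝ E) z := by
      simpa using ((hasFDerivAt_id (𝕜 := ℝ) z).const_smul δ).const_add x
    refine (((hf'.differentiable (by simp) _).hasFDerivAt.comp z hdilate).clm_apply
      (hasFDerivAt_const e z)).congr_fderiv ?_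
    ext v
    simp
  have hfderiv (z : E) : fderiv ℝ (fun z => fderiv ℝ f (x + δ • z) e) z e
      = δ * iteratedFDeriv ℝ 2 f (x + δ • z) ![e, e] := by
    rw [(hu z).fderiv, iteratedFDeriv_two_apply]
    simp
  have hw (z : E) : fderiv ℝ (fun z => ballWeight z ^ 2) z e
      = -4 * (⟪z, e⟫_ℝ * ballWeight z) := by
    rw [(hasFDerivAt_ballWeight_sq z).fderiv, smul_apply, coe_innerSL_apply,
      smul_eq_mul]
    ring
  have hcont : Continuous fun z => fderiv ℝ f (x + δ • z) e := by fun_prop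
  have hcont₂ : Continuous fun z => iteratedFDeriv ℝ 2 f (x + δ • z) ![e, e] := by
    have := hf.continuous_iteratedFDeriv (m := 2) le_rfl
    fun_prop
  have hint : Integrable fun z => fderiv ℝ f (x + δ • z) e * (⟪z, e⟫_ℝ * ballWeight z) := by
    simpa only [mul_assoc] using integrable_mul_ballWeight (E := E)
      (f := fun z => fderiv ℝ f (x + δ • z) e * ⟪z, e⟫_ℝ) (hcont.mul (by fun_prop))
  have hparts := integral_mul_fderiv_eq_neg_fderiv_mul_of_integrable (μ := (volume : Measure E))
    (f := fun z => fderiv ℝ f (x + δ • z) e) (g := fun z => ballWeight z ^ 2) (v := e)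
    (by simpa only [hfderiv] using integrable_mul_ballWeight_sq (hcont₂.const_mul δ))
    (by simpa only [hw, mul_left_comm _ (-4 : ℝ)] using hint.const_mul (-4))
    (integrable_mul_ballWeight_sq hcont) (fun z _ => (hu z).differentiableAt)
    (fun z _ => (hasFDerivAt_ballWeight_sq z).differentiableAt)
  simp_rw [hfderiv, hw, mul_assoc δ, mul_left_comm _ (-4 : ℝ), integral_const_mul] at hparts
  linarith

lemma integral_fderiv_self_mul_ballWeight {f : E → ℝ} (hf : ContDiff ℝ 2 f) (x : E) (δ : ℝ) :
    ∫ z, fderiv ℝ f (x + δ • z) z * ballWeight z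
      = δ / 4 * ∫ z, Δ f (x + δ • z) * ballWeight z ^ 2 := by
  set b := stdOrthonormalBasis ℝ E
  have hcont (e : E) : Continuous fun z => fderiv ℝ f (x + δ • z) e * ⟪z, e⟫_ℝ := by
    have := hf.continuous_fderiv (by simp)
    fun_prop
  have hcont₂ (e : E) : Continuous fun z => iteratedFDeriv ℝ 2 f (x + δ • z) ![e, e] := by
    have := hf.continuous_iteratedFDeriv (m := 2) le_rfl
    fun_prop
  have hexpand (z : E) : fderiv ℝ f (x + δ • z) z * ballWeight z
      = ∑ i, fderiv ℝ f (x + δ • z) (b i) * (⟪z, b i⟫_ℝ * ballWeight z) := by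
    rw [← congrArg (fderiv ℝ f (x + δ • z)) (b.sum_repr' z)]
    simp only [map_sum, map_smul, smul_eq_mul, Finset.sum_mul, real_inner_comm z]
    exact Finset.sum_congr rfl fun i _ => by ring
  simp_rw [hexpand, laplacian_eq_iteratedFDeriv_orthonormalBasis f b, Finset.sum_mul]
  rw [integral_finsetSum _ fun i _ => by
      simpa only [mul_assoc] using integrable_mul_ballWeight (hcont (b i)),
    integral_finsetSum _ fun i _ => integrable_mul_ballWeight_sq (hcont₂ (b i)), Finset.mul_sum]
  exact Finset.sum_congr rfl fun i _ => integral_fderiv_mul_inner_ballWeight hf x (b i) δ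

/-- The average of `f` over `ball x δ` against `ballWeight`, scaled to the unit ball and left
unnormalised. -/
def ballAverage (f : E → ℝ) (x : E) (δ : ℝ) : ℝ := ∫ z, f (x + δ • z) * ballWeight z

lemma ballAverage_zero_radius (f : E → ℝ) (x : E) :
    ballAverage f x 0 = f x * ∫ z : E, ballWeight z := by
  simp [ballAverage, integral_const_mul]

lemma hasDerivAt_ballAverage {f : E → ℝ} (hf : ContDiff ℝ 2 f) (x : E) (δ : ℝ) :
    HasDerivAt (ballAverage f x) (δ / 4 * ∫ z, Δ f (x + δ • z) * ballWeight z ^ 2) δ := by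
  rw [← integral_fderiv_self_mul_ballWeight hf]
  have hfderiv : Continuous (fderiv ℝ f) := hf.continuous_fderiv (by simp)
  have hcont : Continuous fun p : ℝ × E => fderiv ℝ f (x + p.1 • p.2) p.2 := by fun_prop
  obtain ⟨C, hC⟩ := ((isCompact_closedBall δ 1).prod
    (isCompact_closedBall (0 : E) 1)).exists_bound_of_continuousOn hcont.continuousOn
  refine (hasDerivAt_integral_of_dominated_loc_of_deriv_le
    (F := fun δ z => f (x + δ • z) * ballWeight z)
    (F' := fun δ z => fderiv ℝ f (x + δ • z) z * ballWeight z)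
    (bound := fun z => C * ballWeight z) (closedBall_mem_nhds δ one_pos) ?_ ?_ ?_ ?_ ?_ ?_).2
  · exact Eventually.of_forall fun t =>
      (integrable_mul_ballWeight (by fun_prop)).aestronglyMeasurable
  · exact integrable_mul_ballWeight (by fun_prop)
  · exact (integrable_mul_ballWeight (by fun_prop)).aestronglyMeasurable
  · refine Eventually.of_forall fun z t ht => ?_
    rw [norm_mul, Real.norm_of_nonneg (ballWeight_nonneg z)]
    rcases le_or_gt ‖z‖ 1 with hz | hz
    · exact mul_le_mul_of_nonneg_right (hC (t, z) ⟨ht, by simpa using hz⟩) (ballWeight_nonneg z)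
    · simp [ballWeight_eq_zero hz.le]
  · exact integrable_ballWeight.const_mul C
  · exact Eventually.of_forall fun z t _ =>
      (hasDerivAt_comp_line (hf.differentiable (by simp) _)).mul_const _

lemma ballAverage_le_of_laplacian_le {f : E → ℝ} (hf : ContDiff ℝ 2 f) {x : E} {s μ : ℝ}
    (hs : 0 ≤ s) (hμ : 0 ≤ μ) (hΔ : ∀ z ∈ ball x s, Δ f z ≤ μ) :
    ballAverage f x s ≤ (f x + μ * s ^ 2 / 8) * ∫ z : E, ballWeight z := by
  set c : ℝ := ∫ z : E, ballWeight z with hc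
  have hderiv (δ : ℝ) : HasDerivAt (fun δ => ballAverage f x δ - μ * c / 8 * δ ^ 2)
      ((δ / 4 * ∫ z, Δ f (x + δ • z) * ballWeight z ^ 2) - μ * c / 8 * (2 * δ)) δ := by
    simpa using (hasDerivAt_ballAverage hf x δ).fun_sub
      ((hasDerivAt_pow 2 δ).const_mul (μ * c / 8))
  have hle (δ : ℝ) (hδ : δ ∈ Ioo 0 s) :
      ∫ z, Δ f (x + δ • z) * ballWeight z ^ 2 ≤ μ * c := by
    rw [hc, ← integral_const_mul]
    refine integral_mono (integrable_mul_ballWeight_sq ((continuous_laplacian hf).comp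
      (by fun_prop))) (integrable_ballWeight.const_mul μ) fun z => ?_
    rcases lt_or_ge ‖z‖ 1 with hz | hz
    · calc Δ f (x + δ • z) * ballWeight z ^ 2 ≤ μ * ballWeight z ^ 2 :=
            mul_le_mul_of_nonneg_right
              (hΔ _ (ball_subset_ball hδ.2.le (add_smul_mem_ball hδ.1 hz))) (sq_nonneg _)
        _ ≤ μ * ballWeight z := mul_le_mul_of_nonneg_left (ballWeight_sq_le z) hμ
    · simp [ballWeight_eq_zero hz]
  have hanti : AntitoneOn (fun δ => ballAverage f x δ - μ * c / 8 * δ ^ 2) (Icc 0 s) := by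
    refine antitoneOn_of_hasDerivWithinAt_nonpos (convex_Icc 0 s)
      (fun δ _ => (hderiv δ).continuousAt.continuousWithinAt)
      (fun δ _ => (hderiv δ).hasDerivWithinAt) fun δ hδ => ?_
    rw [interior_Icc] at hδ
    nlinarith [mul_le_mul_of_nonneg_left (hle δ hδ) hδ.1.le]
  have := hanti (left_mem_Icc.2 hs) (right_mem_Icc.2 hs) hs
  simp only [ballAverage_zero_radius] at this
  linarith

lemma mul_integral_ballWeight_le_of_neg_mul_le_laplacian {f : E → ℝ} (hf : ContDiff ℝ 2 f) {x : E}
    {s κ : ℝ} (hs : 0 ≤ s) (hκ : 0 ≤ κ) (hpos : ∀ z ∈ ball x s, 0 ≤ f z)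
    (hΔ : ∀ z ∈ ball x s, -κ * f z ≤ Δ f z) :
    f x * ∫ z : E, ballWeight z ≤ ballAverage f x s * exp (κ * s ^ 2 / 8) := by
  have hderiv (δ : ℝ) : HasDerivAt (fun δ => ballAverage f x δ * exp (κ * δ ^ 2 / 8))
      ((δ / 4 * ∫ z, Δ f (x + δ • z) * ballWeight z ^ 2) * exp (κ * δ ^ 2 / 8)
        + ballAverage f x δ * (exp (κ * δ ^ 2 / 8) * (κ * (2 * δ) / 8))) δ := by
    simpa using (hasDerivAt_ballAverage hf x δ).fun_mul
      (((hasDerivAt_pow 2 δ).const_mul κ).div_const 8).exp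
  have hge (δ : ℝ) (hδ : δ ∈ Ioo 0 s) :
      -κ * ballAverage f x δ ≤ ∫ z, Δ f (x + δ • z) * ballWeight z ^ 2 := by
    rw [ballAverage, ← integral_const_mul]
    refine integral_mono ((integrable_mul_ballWeight
      (hf.continuous.comp (by fun_prop))).const_mul _) (integrable_mul_ballWeight_sq
      ((continuous_laplacian hf).comp (by fun_prop))) fun z => ?_
    rcases lt_or_ge ‖z‖ 1 with hz | hz
    · have hmem : x + δ • z ∈ ball x s :=
        ball_subset_ball hδ.2.le (add_smul_mem_ball hδ.1 hz)
      have hκf : 0 ≤ κ * f (x + δ • z) := mul_nonneg hκ (hpos _ hmem)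
      calc -κ * (f (x + δ • z) * ballWeight z) ≤ -κ * f (x + δ • z) * ballWeight z ^ 2 := by
            nlinarith [mul_le_mul_of_nonneg_left (ballWeight_sq_le z) hκf]
        _ ≤ Δ f (x + δ • z) * ballWeight z ^ 2 :=
            mul_le_mul_of_nonneg_right (hΔ _ hmem) (sq_nonneg _)
    · simp [ballWeight_eq_zero hz]
  have hmono : MonotoneOn (fun δ => ballAverage f x δ * exp (κ * δ ^ 2 / 8)) (Icc 0 s) := by
    refine monotoneOn_of_hasDerivWithinAt_nonneg (convex_Icc 0 s)
      (fun δ _ => (hderiv δ).continuousAt.continuousWithinAt)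
      (fun δ _ => (hderiv δ).hasDerivWithinAt) fun δ hδ => ?_
    rw [interior_Icc] at hδ
    have : 0 ≤ δ / 4 * exp (κ * δ ^ 2 / 8) := by have := hδ.1; positivity
    nlinarith [mul_le_mul_of_nonneg_left (hge δ hδ) this]
  simpa [ballAverage_zero_radius] using
    hmono (left_mem_Icc.2 hs) (right_mem_Icc.2 hs) hs

lemma ballAverage_half_radius_eq (f : E → ℝ) (x y : E) {s : ℝ} (hs : s ≠ 0) :
    ballAverage f y (s / 2) = 2 ^ finrank ℝ E *
      ∫ z, f (x + s • z) * ballWeight ((2 : ℝ) • (z - s⁻¹ • (y - x))) := by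
  have htranslate := integral_sub_right_eq_self (μ := (volume : Measure E))
    (fun z => f (x + s • (z + s⁻¹ • (y - x))) * ballWeight ((2 : ℝ) • z)) (s⁻¹ • (y - x))
  have hdilate := Measure.integral_comp_smul_of_nonneg (volume : Measure E)
    (fun z => f (y + (s / 2) • z) * ballWeight z) 2 (hR := by norm_num)
  have harg (z : E) : y + (s / 2) • ((2 : ℝ) • z) = x + s • (z + s⁻¹ • (y - x)) := by
    rw [smul_smul, smul_add, smul_smul, mul_inv_cancel₀ hs, one_smul,
      div_mul_cancel₀ _ (two_ne_zero' ℝ)]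
    abel
  simp only [sub_add_cancel] at htranslate
  simp only [harg] at hdilate
  rw [htranslate, hdilate, ballAverage]
  simp

lemma ballAverage_half_radius_le {f : E → ℝ} (hf : Continuous f) {x y : E} {s : ℝ} (hs : 0 < s)
    (hpos : ∀ z ∈ ball x s, 0 ≤ f z) (hy : y ∈ ball x (s / 4)) :
    ballAverage f y (s / 2) ≤ 2 ^ finrank ℝ E * (16 / 7) * ballAverage f x s := by
  rw [ballAverage_half_radius_eq f x y hs.ne', mul_assoc, ballAverage,
    ← integral_const_mul (16 / 7)]
  set v : E := s⁻¹ • (y - x)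
  have hv : ‖v‖ < 1 / 4 := by
    rw [norm_smul, Real.norm_of_nonneg (by positivity), ← dist_eq_norm, inv_mul_lt_iff₀ hs]
    linarith [mem_ball.1 hy]
  have hnear {z : E} (hz : ‖(2 : ℝ) • (z - v)‖ < 1) : ‖z‖ < 3 / 4 := by
    rw [norm_smul, Real.norm_ofNat] at hz
    linarith [norm_le_norm_sub_add z v]
  refine mul_le_mul_of_nonneg_left ?_ (by positivity)
  refine integral_mono_of_nonneg (Eventually.of_forall fun z => ?_)
    ((integrable_mul_ballWeight (hf.comp (by fun_prop))).const_mul _)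
    (Eventually.of_forall fun z => ?_)
  · rcases lt_or_ge ‖(2 : ℝ) • (z - v)‖ 1 with hz | hz
    · exact mul_nonneg (hpos _ (add_smul_mem_ball hs (by linarith [hnear hz])))
        (ballWeight_nonneg _)
    · simp [ballWeight_eq_zero hz]
  · rcases lt_or_ge ‖z‖ 1 with hz₁ | hz₁
    · have hfz : 0 ≤ f (x + s • z) := hpos _ (add_smul_mem_ball hs hz₁)
      have hweight : ballWeight ((2 : ℝ) • (z - v)) ≤ 16 / 7 * ballWeight z := by
        rcases lt_or_ge ‖(2 : ℝ) • (z - v)‖ 1 with hz | hz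
        · have : 7 / 16 ≤ ballWeight z := le_max_of_le_left (by nlinarith [hnear hz, norm_nonneg z])
          linarith [ballWeight_le_one ((2 : ℝ) • (z - v))]
        · rw [ballWeight_eq_zero hz]
          linarith [ballWeight_nonneg z]
      simpa only [mul_left_comm] using mul_le_mul_of_nonneg_left hweight hfz
    · have : 1 ≤ ‖(2 : ℝ) • (z - v)‖ := not_lt.1 fun hz => by linarith [hnear hz]
      simp [ballWeight_eq_zero this, ballWeight_eq_zero hz₁]

end BallAverage

section Harnack

variable {E : Type*} [NormedAddCommGroup E] [InnerProductSpace ℝ E]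

variable (E) in
/-- The constant of the Harnack inequality `harnack_inequality`. -/
def harnackConst : ℝ := 8 * 2 ^ finrank ℝ E

lemma eight_le_harnackConst : 8 ≤ harnackConst E := by
  rw [harnackConst]
  linarith [one_le_pow₀ (one_le_two : (1 : ℝ) ≤ 2) (n := finrank ℝ E)]

lemma harnackConst_pos : 0 < harnackConst E := by linarith [eight_le_harnackConst (E := E)]

variable [FiniteDimensional ℝ E]

theorem harnack_inequality {f : E → ℝ} (hf : ContDiff ℝ 2 f) {x y : E} {s κ μ : ℝ} (hs : 0 < s)
    (hκ : 0 ≤ κ) (hκs : κ * s ^ 2 ≤ 1) (hμ : 0 ≤ μ) (hpos : ∀ z ∈ ball x s, 0 ≤ f z)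
    (hlower : ∀ z ∈ ball x s, -κ * f z ≤ Δ f z) (hupper : ∀ z ∈ ball x s, Δ f z ≤ μ)
    (hy : y ∈ ball x (s / 4)) : f y ≤ harnackConst E * (f x + μ * s ^ 2) := by
  borelize E
  set c : ℝ := ∫ z : E, ballWeight z
  have hc : 0 < c := integral_ballWeight_pos
  have hsub : ball y (s / 2) ⊆ ball x s :=
    ball_subset_ball' (by linarith [mem_ball.1 hy])
  have hexp : exp (κ * (s / 2) ^ 2 / 8) ≤ 3 :=
    (Real.exp_le_exp.2 (by nlinarith : κ * (s / 2) ^ 2 / 8 ≤ 1)).trans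
      (by linarith [Real.exp_one_lt_d9])
  have hsum : 0 ≤ f x + μ * s ^ 2 := add_nonneg (hpos x (mem_ball_self hs)) (by positivity)
  have haverage : ballAverage f y (s / 2) ≤ 2 ^ finrank ℝ E * (16 / 7) * ((f x + μ * s ^ 2) * c) :=
    (ballAverage_half_radius_le hf.continuous hs hpos hy).trans <|
      mul_le_mul_of_nonneg_left ((ballAverage_le_of_laplacian_le hf hs.le hμ hupper).trans
        (mul_le_mul_of_nonneg_right (by nlinarith [sq_nonneg s]) hc.le)) (by positivity)
  refine le_of_mul_le_mul_right ?_ hc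
  calc f y * c ≤ ballAverage f y (s / 2) * exp (κ * (s / 2) ^ 2 / 8) :=
        mul_integral_ballWeight_le_of_neg_mul_le_laplacian hf (by positivity) hκ
          (fun z hz => hpos z (hsub hz)) (fun z hz => hlower z (hsub hz))
    _ ≤ 2 ^ finrank ℝ E * (16 / 7) * ((f x + μ * s ^ 2) * c) * 3 := by
        gcongr
    _ ≤ harnackConst E * (f x + μ * s ^ 2) * c := by
        rw [harnackConst]
        have : 0 ≤ 2 ^ finrank ℝ E * ((f x + μ * s ^ 2) * c) := by positivity
        nlinarith

end Harnack

section Doubling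

/-- `Q` is a doubling constant of `f` at `y` up to scale `S`: for every `t ≤ S`, passing from the
ball of radius `t` about `y` to the ball of radius `2 * t` multiplies the supremum of `|f|` by at
most `Q`. The suprema are encoded through their upper bounds, so that no boundedness is needed. -/
def HasDoublingConstant {X : Type*} [PseudoMetricSpace X] (f : X → ℝ) (y : X) (S Q : ℝ) : Prop :=
  ∀ t ∈ Ioc 0 S, ∀ b, (∀ z ∈ ball y t, |f z| ≤ b) → ∀ z ∈ ball y (2 * t), |f z| ≤ Q * b

namespace HasDoublingConstant

variable {X : Type*} [PseudoMetricSpace X] {f : X → ℝ} {y : X} {S Q : ℝ}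

lemma neg (h : HasDoublingConstant f y S Q) : HasDoublingConstant (-f) y S Q := by
  simpa only [HasDoublingConstant, Pi.neg_apply, abs_neg] using h

lemma abs_le_pow_mul (h : HasDoublingConstant f y S Q) {t b : ℝ} (ht : 0 < t)
    (hb : ∀ z ∈ ball y t, |f z| ≤ b) (k : ℕ) (hk : 2 ^ k * t ≤ 2 * S) :
    ∀ z ∈ ball y (2 ^ k * t), |f z| ≤ Q ^ k * b := by
  induction k with
  | zero => simpa using hb
  | succ k ih =>
    rw [pow_succ', mul_assoc] at hk ⊢
    have hk' : 2 ^ k * t ≤ S := le_of_mul_le_mul_left hk two_pos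
    have hpos : 0 < 2 ^ k * t := by positivity
    rw [pow_succ', mul_assoc]
    exact h _ ⟨hpos, hk'⟩ _ (ih (by linarith))

end HasDoublingConstant

-- Vanishing at `y` forces `|f| ≤ L * t` on `ball y t`, so `f` at least doubles on average from
-- scale to scale unless it vanishes near `y`.
lemma HasDoublingConstant.two_le {E : Type*} [NormedAddCommGroup E] [NormedSpace ℝ E] {f : E → ℝ}
    {y : E} {S Q : ℝ} (h : HasDoublingConstant f y S Q) (hS : 0 < S) (hQ : 0 ≤ Q)
    (hf : DifferentiableAt ℝ f y) (hy : f y = 0) (hne : ∃ᶠ z in 𝓝 y, f z ≠ 0) : 2 ≤ Q := by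
  by_contra! hQ2
  obtain ⟨L, hL⟩ := hf.isBigO_sub.bound
  obtain ⟨ρ, hρ, hball⟩ := Metric.eventually_nhds_iff_ball.1 hL
  set t : ℝ := min S ρ
  have ht : 0 < t := lt_min hS hρ
  refine hne (Metric.eventually_nhds_iff_ball.2 ⟨t, ht, fun z hz => not_not.2 ?_⟩)
  have hbound (k : ℕ) : |f z| ≤ (Q / 2) ^ k * (|L| * t) := by
    have hsmall (w) (hw : w ∈ ball y (t / 2 ^ k)) : |f w| ≤ |L| * (t / 2 ^ k) := by
      have hwρ : w ∈ ball y ρ := ball_subset_ball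
        ((div_le_self ht.le (one_le_pow₀ one_le_two)).trans (min_le_right _ _)) hw
      calc |f w| ≤ L * ‖w - y‖ := by simpa [hy] using hball w hwρ
        _ ≤ |L| * (t / 2 ^ k) := by
          gcongr
          · exact le_abs_self L
          · exact (mem_ball_iff_norm.1 hw).le
    have hscale : 2 ^ k * (t / 2 ^ k) = t := by field_simp
    have hiter := h.abs_le_pow_mul (by positivity) hsmall k
      (by rw [hscale]; linarith [min_le_left S ρ]) z (by rwa [hscale])
    calc |f z| ≤ Q ^ k * (|L| * (t / 2 ^ k)) := hiter
      _ = (Q / 2) ^ k * (|L| * t) := by rw [div_pow]; ring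
  have hlim : Tendsto (fun k : ℕ => (Q / 2) ^ k * (|L| * t)) atTop (𝓝 (0 * (|L| * t))) :=
    (tendsto_pow_atTop_nhds_zero_of_lt_one (by positivity) (by linarith)).mul_const _
  rw [zero_mul] at hlim
  exact abs_nonpos_iff.1 (ge_of_tendsto' hlim hbound)

lemma hasDoublingConstant_exp_half {X : Type*} [PseudoMetricSpace X] [ProperSpace X] {f : X → ℝ}
    (hf : Continuous f) {y : X} (hne : ∃ᶠ z in 𝓝 y, f z ≠ 0) {S N : ℝ}
    (hN : ∀ t, 0 < t → t ≤ S → log (sSup ((fun z => f z ^ 2) '' ball y (2 * t)) /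
      sSup ((fun z => f z ^ 2) '' ball y t)) ≤ N) :
    HasDoublingConstant f y S (exp (N / 2)) := by
  have hbdd (t : ℝ) : BddAbove ((fun z => f z ^ 2) '' ball y t) :=
    ((isCompact_closedBall y t).bddAbove_image (hf.pow 2).continuousOn).mono
      (image_mono ball_subset_closedBall)
  have hpos {t : ℝ} (ht : 0 < t) : 0 < sSup ((fun z => f z ^ 2) '' ball y t) := by
    obtain ⟨z, hz, hzt⟩ := (hne.and_eventually (ball_mem_nhds y ht)).exists
    exact (by positivity : 0 < f z ^ 2).trans_le (le_csSup (hbdd t) ⟨z, hzt, rfl⟩)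
  intro t ht b hb z hz
  have hb₀ : 0 ≤ b := (abs_nonneg _).trans (hb y (mem_ball_self ht.1))
  have hsup : sSup ((fun z => f z ^ 2) '' ball y t) ≤ b ^ 2 := by
    refine csSup_le ((nonempty_ball.2 ht.1).image _) ?_
    rintro _ ⟨w, hw, rfl⟩
    exact sq_le_sq.2 (by simpa [abs_of_nonneg hb₀] using hb w hw)
  have hratio := (Real.log_le_iff_le_exp
    (div_pos (hpos (mul_pos two_pos ht.1)) (hpos ht.1))).1 (hN t ht.1 ht.2)
  refine abs_le_of_sq_le_sq ?_ (by positivity)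
  calc f z ^ 2 ≤ sSup ((fun z => f z ^ 2) '' ball y (2 * t)) := le_csSup (hbdd _) ⟨z, hz, rfl⟩
    _ ≤ exp N * sSup ((fun z => f z ^ 2) '' ball y t) := (div_le_iff₀ (hpos ht.1)).1 hratio
    _ ≤ exp N * b ^ 2 := by gcongr
    _ = (exp (N / 2) * b) ^ 2 := by rw [mul_pow, ← Real.exp_nat_mul]; ring_nf

end Doubling

section BallMax

/-- The maximum of `f` over the closed ball of radius `t` about `y`. -/
def ballMax {X : Type*} [PseudoMetricSpace X] (f : X → ℝ) (y : X) (t : ℝ) : ℝ :=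
  sSup (f '' closedBall y t)

variable {X : Type*} [PseudoMetricSpace X] [ProperSpace X] {f : X → ℝ} {y : X} {s t : ℝ}

lemma le_ballMax (hf : Continuous f) {z : X} (hz : z ∈ closedBall y t) : f z ≤ ballMax f y t :=
  le_csSup ((isCompact_closedBall y t).bddAbove_image hf.continuousOn) ⟨z, hz, rfl⟩

lemma exists_eq_ballMax (hf : Continuous f) (ht : 0 ≤ t) :
    ∃ z ∈ closedBall y t, f z = ballMax f y t :=
  (isCompact_closedBall y t).image_of_continuousOn hf.continuousOn |>.sSup_mem
    ((nonempty_closedBall.2 ht).image f)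

lemma ballMax_mono (hf : Continuous f) (hs : 0 ≤ s) (hst : s ≤ t) :
    ballMax f y s ≤ ballMax f y t := by
  obtain ⟨z, hz, hmax⟩ := exists_eq_ballMax hf hs
  exact hmax ▸ le_ballMax hf (closedBall_subset_closedBall hst hz)

end BallMax

section Eigenfunction

variable {E : Type*} [NormedAddCommGroup E] [InnerProductSpace ℝ E] [FiniteDimensional ℝ E]

/-- `f` is a classical solution of `Δ f = -lam * f`. -/
structure IsLaplaceEigenfunction (f : E → ℝ) (lam : ℝ) : Prop where
  contDiff : ContDiff ℝ 2 f
  laplacian_eq (x : E) : Δ f x = -lam * f x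

namespace IsLaplaceEigenfunction

variable {f : E → ℝ} {lam : ℝ}

lemma continuous (hf : IsLaplaceEigenfunction f lam) : Continuous f := hf.contDiff.continuous

lemma neg (hf : IsLaplaceEigenfunction f lam) : IsLaplaceEigenfunction (-f) lam where
  contDiff := hf.contDiff.neg
  laplacian_eq x := by rw [laplacian_neg, Pi.neg_apply, hf.laplacian_eq, Pi.neg_apply]; ring

-- At a maximum of `(R ^ 2 - |x - c| ^ 2) ^ 2 / f` the Laplacian of the numerator is at most `-lam`
-- times the numerator, which fails for large `R`.
lemma not_pos_on_closedBall (hf : IsLaplaceEigenfunction f lam) (c : E) {R : ℝ} (hR : 0 < R)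
    (hlamR : ((finrank ℝ E : ℝ) + 2) ^ 2 < 2 * (lam * R ^ 2)) :
    ¬ ∀ z ∈ closedBall c R, 0 < f z := by
  intro hpos
  set g : E → ℝ := fun x => (R ^ 2 - ‖x - c‖ ^ 2) ^ 2 with hgdef
  have hg : ContDiff ℝ 2 g := (contDiff_const.sub (contDiff_norm_sub_sq c)).pow 2
  obtain ⟨p, hp, hmax⟩ := (isCompact_closedBall c R).exists_isMaxOn
    ⟨c, mem_closedBall_self hR.le⟩
    (hg.continuous.continuousOn.div hf.continuous.continuousOn fun z hz => (hpos z hz).ne')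
  set K := g p / f p
  have hK : 0 < K := by
    have : 0 < g c / f c := div_pos (by simp [hgdef, hR]) (hpos c (mem_closedBall_self hR.le))
    exact this.trans_le (hmax (mem_closedBall_self hR.le))
  have hle {z : E} (hz : z ∈ closedBall c R) : g z ≤ K * f z :=
    (div_le_iff₀ (hpos z hz)).1 (hmax hz)
  have heq : g p = K * f p := (div_mul_cancel₀ _ (hpos p hp).ne').symm
  have hlt : ‖p - c‖ ^ 2 < R ^ 2 := by
    refine lt_of_le_of_ne (pow_le_pow_left₀ (norm_nonneg _) (mem_closedBall_iff_norm.1 hp) 2)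
      fun h => (mul_pos hK (hpos p hp)).ne ?_
    rw [← heq, hgdef]
    simp [h]
  have hlocal : IsLocalMax (g - K • f) p := by
    filter_upwards [isOpen_ball.mem_nhds (mem_ball_iff_norm.2 (lt_of_pow_lt_pow_left₀ 2 hR.le hlt))]
      with z hz
    simpa [heq] using hle (ball_subset_closedBall hz)
  have hKf : ContDiff ℝ 2 (K • f) := contDiff_const.smul hf.contDiff
  have hΔ : Δ (g - K • f) p ≤ 0 := laplacian_nonpos_of_isLocalMax (hg.sub hKf).contDiffAt hlocal
  rw [hg.contDiffAt.laplacian_sub hKf.contDiffAt,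
    laplacian_smul _ hf.contDiff.contDiffAt, hf.laplacian_eq, hgdef,
    laplacian_sq_sub_norm_sub_sq, smul_eq_mul] at hΔ
  have hgp : K * (-lam * f p) = -lam * (R ^ 2 - ‖p - c‖ ^ 2) ^ 2 := by rw [mul_left_comm, ← heq]
  nlinarith [sq_nonneg (lam * (R ^ 2 - ‖p - c‖ ^ 2) - 2 * (finrank ℝ E + 2))]

lemma harnack_sub (hf : IsLaplaceEigenfunction f lam) (hlam : 0 ≤ lam) {x y : E} {s m : ℝ}
    (hs : 0 < s) (hlams : lam * s ^ 2 ≤ 1) (hm : 0 ≤ m) (hle : ∀ z ∈ ball x s, f z ≤ m)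
    (hy : y ∈ ball x (s / 4)) :
    m - f y ≤ harnackConst E * (m - f x + lam * s ^ 2 * m) := by
  have hΔ (z : E) : Δ (fun w => m - f w) z = lam * f z :=
    (contDiffAt_const.laplacian_sub hf.contDiff.contDiffAt).trans <| by
      rw [laplacian_const, hf.laplacian_eq]
      simp
  have key := harnack_inequality (contDiff_const.sub hf.contDiff) (μ := lam * m) hs hlam hlams
    (by positivity) (fun z hz => sub_nonneg.2 (hle z hz))
    (fun z _ => by
      rw [hΔ]
      nlinarith)
    (fun z hz => by
      rw [hΔ]
      exact mul_le_mul_of_nonneg_left (hle z hz) hlam) hy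
  simpa only [mul_right_comm lam m] using key

lemma exists_mem_sphere_ballMax_le [Nontrivial E] (hf : IsLaplaceEigenfunction f lam)
    (hlam : 0 < lam) {y : E} {t : ℝ} (ht : 0 ≤ t) (hm : 0 < ballMax f y t) :
    ∃ x ∈ sphere y t, ballMax f y t ≤ f x + lam * t ^ 2 * ballMax f y t := by
  obtain ⟨p, hp, hmax⟩ := exists_eq_ballMax hf.continuous ht
  obtain ⟨x, hx, hle⟩ := exists_mem_sphere_le_add_of_neg_le_laplacian hf.contDiff
    (mul_pos hlam hm) hp fun z hz => by
      rw [hf.laplacian_eq, neg_mul, neg_le_neg_iff]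
      exact mul_le_mul_of_nonneg_left (le_ballMax hf.continuous (ball_subset_closedBall hz)) hlam.le
  refine ⟨x, hx, ?_⟩
  have hdim : (1 : ℝ) ≤ finrank ℝ E := by exact_mod_cast finrank_pos
  have hdiv : lam * ballMax f y t / finrank ℝ E ≤ lam * ballMax f y t :=
    div_le_self (by positivity) hdim
  rw [hmax] at hle
  nlinarith [sq_nonneg t]

lemma abs_le_of_eq_zero (hf : IsLaplaceEigenfunction f lam) (hlam : 0 ≤ lam) {y : E} (hy : f y = 0)
    {r : ℝ} (hr : 0 < r) (hlamr : lam * r ^ 2 ≤ 1) :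
    ∀ z ∈ ball y (r / 4), |f z| ≤ 2 * harnackConst E * ballMax f y r := by
  intro z hz
  set m := ballMax f y r
  have hm : 0 ≤ m := hy ▸ le_ballMax hf.continuous (mem_closedBall_self hr.le)
  have hfz : f z ≤ m :=
    le_ballMax hf.continuous (ball_subset_closedBall (ball_subset_ball (by linarith) hz))
  have hC : 8 * m ≤ harnackConst E * m := mul_le_mul_of_nonneg_right eight_le_harnackConst hm
  have hharnack := hf.harnack_sub hlam hr hlamr hm
    (fun w hw => le_ballMax hf.continuous (ball_subset_closedBall hw)) hz
  have : harnackConst E * (m - f y + lam * r ^ 2 * m) ≤ harnackConst E * (2 * m) := by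
    refine mul_le_mul_of_nonneg_left ?_ harnackConst_pos.le
    rw [hy]
    nlinarith
  exact abs_le.2 ⟨by linarith, by linarith⟩

lemma ballMax_pos (hf : IsLaplaceEigenfunction f lam) (hlam : 0 ≤ lam) {y : E} (hy : f y = 0)
    (hne : ∃ᶠ z in 𝓝 y, f z ≠ 0) {r : ℝ} (hr : 0 < r) (hlamr : lam * r ^ 2 ≤ 1) :
    0 < ballMax f y r := by
  obtain ⟨z, hz, hzr⟩ := (hne.and_eventually (ball_mem_nhds y (by positivity : 0 < r / 4))).exists
  have : 0 < 2 * harnackConst E * ballMax f y r :=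
    (abs_pos.2 hz).trans_le (hf.abs_le_of_eq_zero hlam hy hr hlamr z hzr)
  exact pos_of_mul_pos_right this (by linarith [harnackConst_pos (E := E)])

-- Four doublings lead from the ball of radius `r / 4`, where Harnack's inequality bounds `|f|`, to
-- the ball of radius `4 * r`.
lemma ballMax_two_mul_le (hf : IsLaplaceEigenfunction f lam) (hlam : 0 ≤ lam) {y : E} (hy : f y = 0)
    {r S Q : ℝ} (hr : 0 < r) (hlamr : lam * r ^ 2 ≤ 1) (hQ : HasDoublingConstant f y S Q)
    (hrS : 2 * r ≤ S) : ballMax f y (2 * r) ≤ 2 * harnackConst E * Q ^ 4 * ballMax f y r := by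
  obtain ⟨z, hz, hmax⟩ := exists_eq_ballMax hf.continuous (y := y) (by positivity : 0 ≤ 2 * r)
  have hz' : z ∈ ball y (2 ^ 4 * (r / 4)) := closedBall_subset_ball (by linarith) hz
  calc ballMax f y (2 * r) ≤ |f z| := hmax ▸ le_abs_self _
    _ ≤ Q ^ 4 * (2 * harnackConst E * ballMax f y r) :=
      hQ.abs_le_pow_mul (by positivity) (hf.abs_le_of_eq_zero hlam hy hr hlamr) 4
        (by linarith) z hz'
    _ = 2 * harnackConst E * Q ^ 4 * ballMax f y r := by ring

lemma exists_ball_pos_of_ballMax_le [Nontrivial E] (hf : IsLaplaceEigenfunction f lam)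
    (hlam : 0 < lam) {y : E} {t δ : ℝ} (ht : 0 ≤ t) (hδ : 0 < δ)
    (hsmall : lam * (t + δ) ^ 2 ≤ 1 / (16 * harnackConst E)) (hm : 0 < ballMax f y t)
    (hle : ballMax f y (t + δ) ≤ (1 + 1 / (4 * harnackConst E)) * ballMax f y t) :
    ∃ x ∈ sphere y t, ∀ z ∈ ball x (δ / 4), 0 < f z := by
  set C := harnackConst E
  set m := ballMax f y t
  have hC : 8 ≤ C := eight_le_harnackConst
  obtain ⟨x, hx, hmx⟩ := hf.exists_mem_sphere_ballMax_le hlam ht hm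
  refine ⟨x, hx, fun z hz => ?_⟩
  have hlamt : lam * t ^ 2 ≤ lam * (t + δ) ^ 2 := by gcongr; linarith
  have hlamδ : lam * δ ^ 2 ≤ lam * (t + δ) ^ 2 := by gcongr; linarith
  set τ := lam * (t + δ) ^ 2
  have hCτ : C * τ ≤ 1 / 16 :=
    (mul_le_mul_of_nonneg_left hsmall (by linarith)).trans_eq (by field_simp)
  have hτ : τ ≤ 1 := by nlinarith
  set M := (1 + 1 / (4 * C)) * m with hMdef
  have hMm : M = m + m / (4 * C) := by rw [hMdef]; ring
  have hmM : m ≤ M := by rw [hMm]; linarith [div_pos hm (by linarith : 0 < 4 * C)]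
  have hM : M ≤ 2 * m := by
    rw [hMm]; linarith [div_le_self hm.le (by linarith : 1 ≤ 4 * C)]
  have hharnack := hf.harnack_sub hlam.le hδ (hlamδ.trans hτ) (hm.le.trans hmM)
    (fun w hw => (le_ballMax hf.continuous (closedBall_subset_closedBall' (by
      rw [mem_sphere.1 hx, add_comm]) (ball_subset_closedBall hw))).trans hle) hz
  have hbound : M - f x + lam * δ ^ 2 * M ≤ m / (4 * C) + 3 * τ * m := by
    have := mul_le_mul_of_nonneg_right hlamt hm.le
    have := mul_le_mul hlamδ hM (hm.le.trans hmM) (by positivity)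
    linarith
  have : C * (m / (4 * C) + 3 * τ * m) = m / 4 + 3 * (C * τ) * m := by field_simp
  nlinarith [mul_le_mul_of_nonneg_left hbound (by linarith : 0 ≤ C)]

end IsLaplaceEigenfunction

end Eigenfunction

section Shells

lemma pow_card_filter_mul_le {m : ℕ → ℝ} (hm : Monotone m) {q : ℝ} (hq : 0 ≤ q) (J : ℕ) :
    q ^ (Finset.card {k ∈ Finset.range J | q * m k < m (k + 1)}) * m 0 ≤ m J := by
  induction J with
  | zero => simp
  | succ J ih =>
    rw [Finset.range_add_one, Finset.filter_insert]
    split_ifs with hJ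
    · rw [Finset.card_insert_of_notMem (by simp), pow_succ', mul_assoc]
      exact (mul_le_mul_of_nonneg_left ih hq).trans hJ.le
    · exact ih.trans (hm J.le_succ)

lemma le_two_mul_card_filter_le_mul {m : ℕ → ℝ} (hm : Monotone m) (hm₀ : 0 < m 0) {q B : ℝ}
    (hq : 1 < q) {J : ℕ} (hB : m J ≤ B * m 0) (hJ : 2 * log B ≤ J * log q) :
    (J : ℝ) ≤ 2 * (Finset.card {k ∈ Finset.range J | m (k + 1) ≤ q * m k} : ℝ) := by
  set bad := Finset.card {k ∈ Finset.range J | q * m k < m (k + 1)}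
  have hpow : q ^ bad ≤ B := le_of_mul_le_mul_right
    ((pow_card_filter_mul_le hm (by positivity) J).trans hB) hm₀
  have hlog : bad * log q ≤ log B := by
    rw [← Real.log_pow]
    exact Real.log_le_log (by positivity) hpow
  have hbad : 2 * (bad : ℝ) ≤ J :=
    le_of_mul_le_mul_right (by linarith) (Real.log_pos hq)
  have hcard : (Finset.card {k ∈ Finset.range J | m (k + 1) ≤ q * m k} : ℝ) + bad = J := by
    have := Finset.card_filter_add_card_filter_not (s := Finset.range J)
      (fun k => m (k + 1) ≤ q * m k)
    simp only [not_le, Finset.card_range] at this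
    exact_mod_cast this
  linarith

-- The maxima of `f` over the concentric balls of radii `r + k * (r / J)` grow by a bounded total
-- factor, hence by a factor close to `1` at half of the steps.
theorem IsLaplaceEigenfunction.exists_balls_pos {E : Type*} [NormedAddCommGroup E]
    [InnerProductSpace ℝ E] [FiniteDimensional ℝ E] [Nontrivial E] {f : E → ℝ} {lam : ℝ}
    (hf : IsLaplaceEigenfunction f lam) (hlam : 0 < lam) {y : E} (hy : f y = 0)
    (hne : ∃ᶠ z in 𝓝 y, f z ≠ 0) {r S Q : ℝ} (hr : 0 < r) (hrS : 2 * r ≤ S)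
    (hsmall : lam * (2 * r) ^ 2 ≤ 1 / (16 * harnackConst E)) (hQ : HasDoublingConstant f y S Q)
    {J : ℕ} (hJ : 0 < J)
    (hJQ : 2 * log (2 * harnackConst E * Q ^ 4) ≤ J * log (1 + 1 / (4 * harnackConst E))) :
    ∃ (G : Finset ℕ) (x : ℕ → E), G ⊆ Finset.range J ∧ (J : ℝ) ≤ 2 * G.card ∧
      (∀ k ∈ G, dist (x k) y = r + k * (r / J)) ∧
      ∀ k ∈ G, ∀ z ∈ ball (x k) (r / J / 4), 0 < f z := by
  have hC : 8 ≤ harnackConst E := eight_le_harnackConst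
  have hJ₀ : (0 : ℝ) < J := by exact_mod_cast hJ
  set δ := r / J with hδdef
  have hδ : 0 < δ := by positivity
  have hJδ : J * δ = r := by rw [hδdef]; field_simp
  have hlamr : lam * r ^ 2 ≤ 1 := by
    have : 1 / (16 * harnackConst E) ≤ 1 := (div_le_one (by linarith)).2 (by linarith)
    nlinarith [mul_pos hlam (pow_pos hr 2)]
  set m : ℕ → ℝ := fun k => ballMax f y (r + k * δ) with hm
  have hm₀ : m 0 = ballMax f y r := by simp [hm]
  have hmJ : m J = ballMax f y (2 * r) := by simp only [hm, hJδ, two_mul]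
  have hmono : Monotone m := fun k l hkl =>
    ballMax_mono hf.continuous (by positivity) (by gcongr)
  have hpos : 0 < m 0 := hm₀ ▸ hf.ballMax_pos hlam.le hy hne hr hlamr
  have hgood := le_two_mul_card_filter_le_mul hmono hpos
    (lt_add_of_pos_right 1 (by positivity : 0 < 1 / (4 * harnackConst E)))
    (by rw [hm₀, hmJ]; exact hf.ballMax_two_mul_le hlam.le hy hr hlamr hQ hrS) hJQ
  have hball (k : ℕ) (hk : k ∈ Finset.filter
      (fun k => m (k + 1) ≤ (1 + 1 / (4 * harnackConst E)) * m k) (Finset.range J)) :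
      ∃ x ∈ sphere y (r + k * δ), ∀ z ∈ ball x (δ / 4), 0 < f z := by
    obtain ⟨hkJ, hle⟩ := Finset.mem_filter.1 hk
    have hstep : r + (k + 1 : ℕ) * δ = r + k * δ + δ := by push_cast; ring
    have hkJ' : (k : ℝ) + 1 ≤ J := by exact_mod_cast Finset.mem_range.1 hkJ
    have hle2r : r + k * δ + δ ≤ 2 * r := by nlinarith
    simp only [hm, hstep] at hle
    refine hf.exists_ball_pos_of_ballMax_le hlam (by positivity) hδ (hsmall.trans' ?_)
      (hpos.trans_le (hmono k.zero_le)) hle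
    gcongr
  choose! x hx hxpos using hball
  exact ⟨_, x, Finset.filter_subset _ _, hgood, fun k hk => mem_sphere.1 (hx k hk), hxpos⟩

end Shells

section PotentialSum

lemma sum_range_inv_one_add_abs_sub_le {J k₀ : ℕ} (hk₀ : k₀ < J) :
    ∑ k ∈ Finset.range J, (1 + |(k : ℝ) - k₀|)⁻¹ ≤ 2 * (1 + log J) := by
  have hharm (l : ℕ) (hl : l ≤ J) : ∑ k ∈ Finset.range l, (1 + (k : ℝ))⁻¹ ≤ 1 + log J := by
    calc ∑ k ∈ Finset.range l, (1 + (k : ℝ))⁻¹ ≤ ∑ k ∈ Finset.range J, (1 + (k : ℝ))⁻¹ :=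
          Finset.sum_le_sum_of_subset_of_nonneg (Finset.range_subset_range.2 hl)
            fun k _ _ => by positivity
      _ = (harmonic J : ℝ) := by simp [harmonic, add_comm]
      _ ≤ 1 + log J := harmonic_le_one_add_log J
  rw [← Finset.sum_range_add_sum_Ico _ (Nat.succ_le_of_lt hk₀), two_mul]
  refine add_le_add ?_ ?_
  · rw [← Finset.sum_range_reflect]
    refine (Finset.sum_congr rfl fun k hk => ?_).trans_le (hharm (k₀ + 1) hk₀)
    have hk' : k ≤ k₀ := Nat.lt_succ_iff.1 (Finset.mem_range.1 hk)
    rw [show k₀.succ - 1 - k = k₀ - k by simp, Nat.cast_sub hk', abs_of_nonpos (by simp)]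
    ring_nf
  · rw [Finset.sum_Ico_eq_sum_range]
    refine (Finset.sum_le_sum fun k _ => ?_).trans (hharm (J - (k₀ + 1)) (Nat.sub_le _ _))
    have : (((k₀.succ + k : ℕ) : ℝ)) - k₀ = 1 + k := by push_cast; ring
    rw [this, abs_of_nonneg (by positivity)]
    gcongr
    linarith

lemma sum_dist_rpow_neg_le {X : Type*} [PseudoMetricSpace X] {J : ℕ} {G : Finset ℕ}
    (hG : G ⊆ Finset.range J) (hne : G.Nonempty) {x : ℕ → X} {δ : ℝ} (hδ : 0 < δ) {α : ℝ}
    (hα : 1 ≤ α) (hsep : ∀ k ∈ G, ∀ l ∈ G, δ * |(k : ℝ) - l| ≤ dist (x k) (x l)) {p : X}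
    (hp : ∀ k ∈ G, δ / 4 ≤ dist p (x k)) :
    ∑ k ∈ G, dist p (x k) ^ (-α) ≤ (δ / 8) ^ (-α) * (2 * (1 + log J)) := by
  obtain ⟨k₀, hk₀, hmin⟩ := G.exists_min_image (fun k => dist p (x k)) hne
  have hterm (k) (hk : k ∈ G) :
      dist p (x k) ^ (-α) ≤ (δ / 8) ^ (-α) * (1 + |(k : ℝ) - k₀|)⁻¹ := by
    set a := |(k : ℝ) - k₀|
    have ha : 0 ≤ a := abs_nonneg _
    have hdist : δ / 8 * (1 + a) ≤ dist p (x k) := by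
      have := (hsep k hk k₀ hk₀).trans (dist_triangle_left _ _ p)
      nlinarith [hmin k hk, hp k hk]
    calc dist p (x k) ^ (-α) ≤ (δ / 8 * (1 + a)) ^ (-α) :=
          Real.rpow_le_rpow_of_nonpos (by positivity) hdist (by linarith)
      _ = (δ / 8) ^ (-α) * (1 + a) ^ (-α) := Real.mul_rpow (by positivity) (by positivity)
      _ ≤ (δ / 8) ^ (-α) * (1 + a) ^ (-1 : ℝ) := by gcongr; linarith
      _ = (δ / 8) ^ (-α) * (1 + a)⁻¹ := by rw [Real.rpow_neg_one]
  calc ∑ k ∈ G, dist p (x k) ^ (-α)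
      ≤ ∑ k ∈ G, (δ / 8) ^ (-α) * (1 + |(k : ℝ) - k₀|)⁻¹ := Finset.sum_le_sum hterm
    _ ≤ ∑ k ∈ Finset.range J, (δ / 8) ^ (-α) * (1 + |(k : ℝ) - k₀|)⁻¹ :=
      Finset.sum_le_sum_of_subset_of_nonneg hG fun k _ _ => by positivity
    _ ≤ (δ / 8) ^ (-α) * (2 * (1 + log J)) := by
      rw [← Finset.mul_sum]
      gcongr
      exact sum_range_inv_one_add_abs_sub_le (Finset.mem_range.1 (hG hk₀))

end PotentialSum

section Comparison

variable {E : Type*} [NormedAddCommGroup E] [InnerProductSpace ℝ E] {ι : Type*}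

/-- The sum of the fundamental solutions of the Laplacian (without their normalization) with poles
`x k`, `k ∈ G`. -/
def newtonPotential (G : Finset ι) (x : ι → E) (p : E) : ℝ :=
  ∑ k ∈ G, ‖p - x k‖ ^ (2 - (finrank ℝ E : ℝ))

variable {G : Finset ι} {x : ι → E} {p : E}

lemma contDiffAt_norm_sub_rpow {a : E} (hp : p ≠ a) {s : ℝ} {n : WithTop ℕ∞} :
    ContDiffAt ℝ n (fun p => ‖p - a‖ ^ s) p :=
  ((contDiffAt_id.sub contDiffAt_const).norm ℝ (sub_ne_zero.2 hp)).rpow_const_of_ne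
    (norm_ne_zero_iff.2 (sub_ne_zero.2 hp))

lemma contDiffAt_newtonPotential (hp : ∀ k ∈ G, p ≠ x k) {n : WithTop ℕ∞} :
    ContDiffAt ℝ n (newtonPotential G x) p :=
  ContDiffAt.sum fun k hk => contDiffAt_norm_sub_rpow (hp k hk)

lemma laplacian_newtonPotential [FiniteDimensional ℝ E] (hp : ∀ k ∈ G, p ≠ x k) :
    Δ (newtonPotential G x) p = 0 := by
  classical
  induction G using Finset.induction_on with
  | empty =>
    have : newtonPotential ∅ x = fun _ => 0 := by ext; simp [newtonPotential]
    simp [this]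
  | insert a G ha ih =>
    have hsum : newtonPotential (insert a G) x =
        (fun p => ‖p - x a‖ ^ (2 - (finrank ℝ E : ℝ))) + newtonPotential G x := by
      ext; simp [newtonPotential, ha]
    have hG : ∀ k ∈ G, p ≠ x k := fun k hk => hp k (Finset.mem_insert_of_mem hk)
    have ha' : p ≠ x a := hp a (Finset.mem_insert_self _ _)
    rw [hsum, (contDiffAt_norm_sub_rpow ha').laplacian_add (contDiffAt_newtonPotential hG),
      laplacian_norm_sub_rpow ha', ih hG, add_zero]

lemma card_mul_rpow_le_newtonPotential (hd : 2 ≤ finrank ℝ E) {R : ℝ} (hp : ∀ k ∈ G, p ≠ x k)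
    (hR : ∀ k ∈ G, dist p (x k) ≤ R) :
    G.card * R ^ (2 - (finrank ℝ E : ℝ)) ≤ newtonPotential G x p := by
  have hd' : (2 : ℝ) ≤ finrank ℝ E := by exact_mod_cast hd
  rw [← nsmul_eq_mul]
  refine Finset.card_nsmul_le_sum _ _ _ fun k hk => ?_
  rw [← dist_eq_norm]
  exact Real.rpow_le_rpow_of_nonpos (dist_pos.2 (hp k hk)) (hR k hk) (by linarith)

lemma newtonPotential_le_card_mul_rpow (hd : 2 ≤ finrank ℝ E) {R : ℝ} (hR₀ : 0 < R)
    (hR : ∀ k ∈ G, R ≤ dist p (x k)) :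
    newtonPotential G x p ≤ G.card * R ^ (2 - (finrank ℝ E : ℝ)) := by
  have hd' : (2 : ℝ) ≤ finrank ℝ E := by exact_mod_cast hd
  rw [← nsmul_eq_mul]
  refine Finset.sum_le_card_nsmul _ _ _ fun k hk => ?_
  rw [← dist_eq_norm]
  exact Real.rpow_le_rpow_of_nonpos hR₀ (hR k hk) (by linarith)

variable [FiniteDimensional ℝ E] {f : E → ℝ} {lam : ℝ}

-- The maximum principle on `Ω ∩ B(x₀, ρ)` for
-- `f + (f x₀ / (2 * U)) * newtonPotential G x + lam * f x₀ * |· - x₀| ^ 2`.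
lemma IsLaplaceEigenfunction.exists_mem_sphere_newtonPotential_le [Nontrivial E]
    (hf : IsLaplaceEigenfunction f lam) (hlam : 0 < lam) {Ω : Set E} (hΩ : IsOpen Ω)
    (hzero : ∀ z ∈ frontier Ω, f z = 0) {x₀ : E} (hx₀ : x₀ ∈ Ω) (hpos : 0 < f x₀) {ρ U : ℝ}
    (hρ : 0 ≤ ρ) (hρ₂ : lam * ρ ^ 2 < 1 / 2) (hmax : ∀ z ∈ Ω, f z ≤ (1 + lam * ρ ^ 2) * f x₀)
    (hx : ∀ k ∈ G, x k ∉ closure Ω) (hU : 0 < U)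
    (hle : ∀ p ∈ closure Ω, newtonPotential G x p ≤ U) :
    ∃ p ∈ Ω ∩ sphere x₀ ρ,
      newtonPotential G x x₀ ≤ newtonPotential G x p + 4 * U * (lam * ρ ^ 2) := by
  set β := f x₀ / (2 * U)
  have hβ : 0 < β := by positivity
  have hβU : β * U = f x₀ / 2 := by simp only [β]; field_simp
  have hpot {p} (hp : p ∈ closure Ω) : ContDiffAt ℝ 2 (newtonPotential G x) p :=
    contDiffAt_newtonPotential fun k hk (h : p = x k) => hx k hk (h ▸ hp)
  have hquad (p) : ContDiffAt ℝ 2 (fun z => ‖z - x₀‖ ^ 2) p := (contDiff_norm_sub_sq x₀).contDiffAt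
  have hβpot {p} (hp : p ∈ closure Ω) : ContDiffAt ℝ 2 (β • newtonPotential G x) p :=
    contDiffAt_const.smul (hpot hp)
  have hlamquad (p) : ContDiffAt ℝ 2 ((lam * f x₀) • fun z => ‖z - x₀‖ ^ 2) p :=
    contDiffAt_const.smul (hquad p)
  have hsum {p} (hp : p ∈ closure Ω) : ContDiffAt ℝ 2 (f + β • newtonPotential G x) p :=
    hf.contDiff.contDiffAt.add (hβpot hp)
  have hpot₀ : 0 ≤ newtonPotential G x x₀ := Finset.sum_nonneg fun _ _ => by positivity
  have hΔ {p} (hp : p ∈ Ω) : 0 <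
      Δ (f + β • newtonPotential G x + (lam * f x₀) • fun z => ‖z - x₀‖ ^ 2) p := by
    have hpc := subset_closure hp
    rw [(hsum hpc).laplacian_add (hlamquad p), hf.contDiff.contDiffAt.laplacian_add (hβpot hpc),
      laplacian_smul _ (hpot hpc), laplacian_smul _ (hquad p), hf.laplacian_eq,
      laplacian_newtonPotential fun k hk (h : p = x k) => hx k hk (h ▸ hpc), laplacian_norm_sub_sq]
    have hdim : (1 : ℝ) ≤ finrank ℝ E := by exact_mod_cast finrank_pos
    have : f p < 2 * f x₀ := (hmax p hp).trans_lt (by nlinarith)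
    have : lam * f x₀ ≤ lam * f x₀ * finrank ℝ E := le_mul_of_one_le_right (by positivity) hdim
    simp only [smul_eq_mul]
    nlinarith
  obtain ⟨p, ⟨hpΩ, hp⟩, hle'⟩ := exists_mem_sphere_le_of_laplacian_pos hΩ
    ⟨hx₀, mem_closedBall_self hρ⟩
    (fun p hp => ((hsum hp.1).add (hlamquad p)).continuousAt.continuousWithinAt)
    (fun p hp => (hsum (subset_closure hp.1)).add (hlamquad p)) (fun p hp => hΔ hp.1)
    (fun p hp => by
      have : ‖p - x₀‖ ^ 2 ≤ ρ ^ 2 := by gcongr; exact mem_closedBall_iff_norm.1 hp.2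
      have : lam * f x₀ * ‖p - x₀‖ ^ 2 ≤ lam * f x₀ * ρ ^ 2 := by gcongr
      have : β * newtonPotential G x p ≤ β * U := by
        gcongr; exact hle p (frontier_subset_closure hp.1)
      simp only [Pi.add_apply, Pi.smul_apply, smul_eq_mul, sub_self, norm_zero, hzero p hp.1]
      nlinarith [mul_nonneg hβ.le hpot₀])
  refine ⟨p, ⟨hpΩ, hp⟩, le_of_mul_le_mul_left ?_ hβ⟩
  simp only [Pi.add_apply, Pi.smul_apply, smul_eq_mul, sub_self, norm_zero,
    mem_sphere_iff_norm.1 hp] at hle'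
  linear_combination hle' + hmax p hpΩ - 4 * (lam * ρ ^ 2) * hβU

lemma IsLaplaceEigenfunction.card_mul_rpow_le (hE : 3 ≤ finrank ℝ E)
    (hf : IsLaplaceEigenfunction f lam) (hlam : 0 < lam) {Ω : Set E} (hΩ : IsOpen Ω)
    (hzero : ∀ z ∈ frontier Ω, f z = 0) {x₀ : E} (hx₀ : x₀ ∈ Ω) (hpos : 0 < f x₀) {R U : ℝ}
    (hR : 0 < R) (hR₂ : lam * (3 * R) ^ 2 < 1 / 2)
    (hmax : ∀ z ∈ Ω, f z ≤ (1 + lam * (3 * R) ^ 2) * f x₀) (hx : ∀ k ∈ G, x k ∉ closure Ω)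
    (hxR : ∀ k ∈ G, dist (x k) x₀ ≤ R) (hU : 0 < U)
    (hle : ∀ p ∈ closure Ω, newtonPotential G x p ≤ U) :
    G.card * R ^ (2 - (finrank ℝ E : ℝ)) ≤ 72 * U * (lam * R ^ 2) := by
  have : Nontrivial E := Module.nontrivial_of_finrank_pos (R := ℝ) (by omega)
  obtain ⟨p, ⟨-, hp⟩, hle'⟩ := hf.exists_mem_sphere_newtonPotential_le hlam hΩ hzero hx₀ hpos
    (by positivity) hR₂ hmax hx hU hle
  have hfar (k) (hk : k ∈ G) : 2 * R ≤ dist p (x k) := by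
    linarith [dist_triangle p (x k) x₀, hxR k hk, mem_sphere.1 hp]
  have hlower : G.card * R ^ (2 - (finrank ℝ E : ℝ)) ≤ newtonPotential G x x₀ :=
    card_mul_rpow_le_newtonPotential (by omega)
      (fun k hk h => hx k hk (h ▸ subset_closure hx₀)) fun k hk => dist_comm (x k) x₀ ▸ hxR k hk
  have hupper : newtonPotential G x p ≤ G.card * (2 * R) ^ (2 - (finrank ℝ E : ℝ)) :=
    newtonPotential_le_card_mul_rpow (by omega) (by positivity) hfar
  have htwo : (2 : ℝ) ^ (2 - (finrank ℝ E : ℝ)) ≤ 1 / 2 := by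
    have hE' : (3 : ℝ) ≤ finrank ℝ E := by exact_mod_cast hE
    calc (2 : ℝ) ^ (2 - (finrank ℝ E : ℝ)) ≤ 2 ^ (-1 : ℝ) :=
          Real.rpow_le_rpow_of_exponent_le one_le_two (by linarith)
      _ = 1 / 2 := by rw [Real.rpow_neg_one, one_div]
  rw [Real.mul_rpow zero_le_two hR.le] at hupper
  have : G.card * (2 ^ (2 - (finrank ℝ E : ℝ)) * R ^ (2 - (finrank ℝ E : ℝ))) ≤
      G.card * (1 / 2 * R ^ (2 - (finrank ℝ E : ℝ))) := by gcongr
  linarith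

end Comparison

section Numerics

lemma rpow_one_sub_le_of_le_mul_one_add_log {s σ c x : ℝ} (hs : s < σ) (hx : 1 ≤ x) (hc : 0 ≤ c)
    (h : x ≤ c * x ^ s * (1 + log x)) : x ^ (1 - σ) ≤ c * (1 + 1 / (σ - s)) := by
  have hx₀ : 0 < x := one_pos.trans_le hx
  have hσ : 0 < σ - s := sub_pos.2 hs
  have hlog : 1 + log x ≤ (1 + 1 / (σ - s)) * x ^ (σ - s) := by
    have hle : log x ≤ x ^ (σ - s) / (σ - s) := Real.log_le_rpow_div hx₀.le hσ
    have hone : 1 ≤ x ^ (σ - s) := Real.one_le_rpow hx hσ.le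
    linear_combination hle + hone
  rw [Real.rpow_sub hx₀, Real.rpow_one, div_le_iff₀ (by positivity)]
  calc x ≤ c * x ^ s * ((1 + 1 / (σ - s)) * x ^ (σ - s)) := h.trans (by gcongr)
    _ = c * (1 + 1 / (σ - s)) * x ^ σ := by
      rw [← sub_add_cancel σ s, Real.rpow_add hx₀, sub_add_cancel]; ring

lemma exists_nat_mul_ge_log_mul_exp (C : ℝ) {η : ℝ} (hη : 0 < η) :
    ∃ A > 0, ∀ N : ℝ, 1 ≤ N →
      ∃ J : ℕ, 0 < J ∧ 2 * log (C * exp (N / 2) ^ 4) ≤ J * η ∧ (J : ℝ) ≤ A * N := by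
  set A := (2 * |log C| + 4) / η with hA
  have hA₀ : 0 < A := by positivity
  refine ⟨A + 1, by positivity, fun N hN => ?_⟩
  have hAN : 0 < A * N := by positivity
  refine ⟨⌈A * N⌉₊, Nat.ceil_pos.2 hAN, ?_, ?_⟩
  · calc 2 * log (C * exp (N / 2) ^ 4) ≤ (2 * |log C| + 4) * N := by
          rcases eq_or_ne C 0 with rfl | hC
          · rw [zero_mul, log_zero, mul_zero]; positivity
          rw [Real.log_mul hC (by positivity), ← Real.exp_nat_mul, Real.log_exp]
          push_cast
          nlinarith [le_abs_self (log C), abs_nonneg (log C)]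
      _ = A * N * η := by rw [hA]; field_simp
      _ ≤ ⌈A * N⌉₊ * η := by gcongr; exact Nat.le_ceil _
  · linarith [Nat.ceil_lt_add_one hAN.le]

lemma mul_rpow_neg_half_sq {lam : ℝ} (hlam : 0 < lam) : lam * (lam ^ (-(1 : ℝ) / 2)) ^ 2 = 1 := by
  rw [← Real.rpow_natCast, ← Real.rpow_mul hlam.le]
  norm_num [Real.rpow_neg_one, hlam.ne']

lemma mul_sq_le_of_le_mul_rpow_neg_half {lam C r : ℝ} (hlam : 0 < lam) (hC : 1 ≤ C) (hr : 0 ≤ r)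
    (h : r ≤ 1 / (8 * C) * lam ^ (-(1 : ℝ) / 2)) : lam * r ^ 2 ≤ 1 / (16 * C) :=
  calc lam * r ^ 2 ≤ lam * (1 / (8 * C) * lam ^ (-(1 : ℝ) / 2)) ^ 2 := by gcongr
    _ = (1 / (8 * C)) ^ 2 * (lam * (lam ^ (-(1 : ℝ) / 2)) ^ 2) := by ring
    _ = 1 / (16 * C * (4 * C)) := by rw [mul_rpow_neg_half_sq hlam]; ring
    _ ≤ 1 / (16 * C) :=
      one_div_le_one_div_of_le (by positivity)
        (le_mul_of_one_le_right (by positivity) (by linarith))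

lemma rpow_neg_mul_le_of_rpow_neg_le {A N J K lam r e : ℝ} (hA : 0 < A) (hN : 0 < N) (hJ : 0 < J)
    (hJN : J ≤ A * N) (hK : 0 < K) (hlam : 0 < lam) (hr : 0 ≤ r) (he : 0 ≤ e)
    (h : J ^ (-(2 * e)) ≤ K * (lam * r ^ 2)) :
    A ^ (-e) / √K * lam ^ (-(1 : ℝ) / 2) * N ^ (-e) ≤ r := by
  set L := lam ^ (-(1 : ℝ) / 2)
  have hL : lam * L ^ 2 = 1 := mul_rpow_neg_half_sq hlam
  have hsq : ((A * N) ^ (-e)) ^ 2 ≤ K * (lam * r ^ 2) := by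
    refine le_trans ?_ h
    rw [← Real.rpow_mul_natCast (by positivity), Nat.cast_two, neg_mul, mul_comm e]
    exact Real.rpow_le_rpow_of_nonpos hJ hJN (by linarith)
  refine (pow_le_pow_iff_left₀ (by positivity) hr two_ne_zero).1 ?_
  calc (A ^ (-e) / √K * L * N ^ (-e)) ^ 2 = ((A * N) ^ (-e)) ^ 2 * (L ^ 2 / K) := by
        rw [Real.mul_rpow hA.le hN.le, mul_pow, mul_pow, div_pow, Real.sq_sqrt hK.le]
        ring
    _ ≤ K * (lam * r ^ 2) * (L ^ 2 / K) := by gcongr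
    _ = lam * L ^ 2 * r ^ 2 := by field_simp
    _ = r ^ 2 := by rw [hL, one_mul]

end Numerics

section PositiveDomain

/-- `Ω` is an open set on which `f` is positive and on whose frontier `f` vanishes; it need not be
connected, so that it may be a union of nodal domains. -/
structure IsPositiveDomain {X : Type*} [TopologicalSpace X] (f : X → ℝ) (Ω : Set X) : Prop where
  isOpen : IsOpen Ω
  pos : ∀ z ∈ Ω, 0 < f z
  eq_zero : ∀ z ∈ frontier Ω, f z = 0

namespace IsPositiveDomain

section TopologicalSpace

variable {X : Type*} [TopologicalSpace X] {f : X → ℝ} {Ω : Set X}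

lemma nonneg (h : IsPositiveDomain f Ω) {p : X} (hp : p ∈ closure Ω) : 0 ≤ f p := by
  rcases closure_eq_self_union_frontier Ω ▸ hp with hp | hp
  exacts [(h.pos p hp).le, (h.eq_zero p hp).ge]

lemma frequently_ne_zero (h : IsPositiveDomain f Ω) {y : X} (hy : y ∈ frontier Ω) :
    ∃ᶠ z in 𝓝 y, f z ≠ 0 :=
  (mem_closure_iff_frequently.1 (frontier_subset_closure hy)).mono fun z hz => (h.pos z hz).ne'

end TopologicalSpace

lemma one_le_of_hasDoublingConstant {E : Type*} [NormedAddCommGroup E] [NormedSpace ℝ E]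
    {f : E → ℝ} {Ω : Set E} (h : IsPositiveDomain f Ω) (hf : Differentiable ℝ f) {y : E}
    (hy : y ∈ frontier Ω) {S N : ℝ} (hS : 0 < S)
    (hN : HasDoublingConstant f y S (exp (N / 2))) : 1 ≤ N := by
  have htwo : 2 ≤ exp (N / 2) := hN.two_le hS (exp_pos _).le hf.differentiableAt
    (h.eq_zero y hy) (h.frequently_ne_zero hy)
  have hlog : log 2 ≤ N / 2 := (Real.log_le_iff_le_exp two_pos).2 htwo
  linarith [Real.log_two_gt_d9]

variable {E : Type*} [NormedAddCommGroup E] [InnerProductSpace ℝ E] [FiniteDimensional ℝ E]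
  {f : E → ℝ} {Ω : Set E} {lam : ℝ}

lemma card_le_mul_rpow_mul_log (h : IsPositiveDomain f Ω) (hE : 3 ≤ finrank ℝ E)
    (hf : IsLaplaceEigenfunction f lam) (hlam : 0 < lam) {x₀ : E} (hx₀ : x₀ ∈ Ω) {r : ℝ}
    (hr : 0 < r) (hr₂ : lam * (9 * r) ^ 2 < 1 / 2)
    (hmax : ∀ z ∈ Ω, f z ≤ (1 + lam * (9 * r) ^ 2) * f x₀) {J : ℕ} (hJ : 0 < J) {G : Finset ℕ}
    (hG : G ⊆ Finset.range J) {x : ℕ → E}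
    (hsep : ∀ k ∈ G, ∀ l ∈ G, r / J * |(k : ℝ) - l| ≤ dist (x k) (x l))
    (hxR : ∀ k ∈ G, dist (x k) x₀ ≤ 3 * r)
    (hneg : ∀ k ∈ G, ∀ z ∈ ball (x k) (r / J / 4), f z < 0) :
    (G.card : ℝ) ≤ 1296 * 24 ^ ((finrank ℝ E : ℝ) - 2) * (lam * r ^ 2) *
      (J : ℝ) ^ ((finrank ℝ E : ℝ) - 2) * (1 + log J) := by
  have : 0 ≤ log J := Real.log_natCast_nonneg J
  rcases G.eq_empty_or_nonempty with rfl | hne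
  · simp only [Finset.card_empty, Nat.cast_zero]; positivity
  have hE' : (3 : ℝ) ≤ finrank ℝ E := by exact_mod_cast hE
  have hJ₀ : (0 : ℝ) < J := by exact_mod_cast hJ
  have hδ : 0 < r / J := by positivity
  have hfar {p} (hp : p ∈ closure Ω) (k) (hk : k ∈ G) : r / J / 4 ≤ dist p (x k) :=
    not_lt.1 fun hlt => (hneg k hk p hlt).not_ge (h.nonneg hp)
  have hpot {p} (hp : p ∈ closure Ω) : newtonPotential G x p ≤
      (r / J / 8) ^ (2 - (finrank ℝ E : ℝ)) * (2 * (1 + log J)) := by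
    simpa only [newtonPotential, dist_eq_norm, neg_sub] using
      sum_dist_rpow_neg_le hG hne hδ (α := (finrank ℝ E : ℝ) - 2) (by linarith) hsep (hfar hp)
  have hcard := hf.card_mul_rpow_le hE hlam h.isOpen h.eq_zero hx₀ (h.pos x₀ hx₀)
    (R := 3 * r) (by positivity) (by convert hr₂ using 3; ring) (by convert hmax using 6; ring)
    (fun k hk hxk => by linarith [hfar hxk k hk, dist_self (x k)]) hxR (by positivity)
    (fun p => hpot)
  have hscale : (r / J / 8) ^ (2 - (finrank ℝ E : ℝ)) = (3 * r) ^ (2 - (finrank ℝ E : ℝ)) *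
      (24 ^ ((finrank ℝ E : ℝ) - 2) * (J : ℝ) ^ ((finrank ℝ E : ℝ) - 2)) := by
    have hquot : r / J / 8 = 3 * r / (24 * J) := by field_simp; norm_num
    rw [hquot, ← neg_sub (finrank ℝ E : ℝ) 2, Real.div_rpow (by positivity) (by positivity),
      Real.rpow_neg (x := 24 * (J : ℝ)) (by positivity), div_inv_eq_mul,
      Real.mul_rpow (by norm_num) hJ₀.le]
  rw [hscale] at hcard
  refine le_of_mul_le_mul_right (hcard.trans_eq ?_)
    (by positivity : 0 < (3 * r) ^ (2 - (finrank ℝ E : ℝ)))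
  ring

lemma natCast_le_mul_rpow_mul_log (h : IsPositiveDomain f Ω) (hE : 3 ≤ finrank ℝ E)
    (hf : IsLaplaceEigenfunction f lam) (hlam : 0 < lam) {x₀ y : E} (hx₀ : x₀ ∈ Ω)
    (hy : y ∈ frontier Ω) {r S Q : ℝ} (hr : dist y x₀ < r) (hrS : 2 * r ≤ S)
    (hsmall : lam * (2 * r) ^ 2 ≤ 1 / (16 * harnackConst E))
    (hmax : ∀ z ∈ Ω, f z ≤ (1 + lam * (9 * r) ^ 2) * f x₀)
    (hQ : HasDoublingConstant f y S Q) {J : ℕ} (hJ : 0 < J)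
    (hJQ : 2 * log (2 * harnackConst E * Q ^ 4) ≤ J * log (1 + 1 / (4 * harnackConst E))) :
    (J : ℝ) ≤ 2592 * 24 ^ ((finrank ℝ E : ℝ) - 2) * (lam * r ^ 2) *
      (J : ℝ) ^ ((finrank ℝ E : ℝ) - 2) * (1 + log J) := by
  have : Nontrivial E := Module.nontrivial_of_finrank_pos (R := ℝ) (by omega)
  have hr₀ : 0 < r := dist_nonneg.trans_lt hr
  have : (0 : ℝ) < J := by exact_mod_cast hJ
  obtain ⟨G, x, hG, hcard, hdist, hneg⟩ := hf.neg.exists_balls_pos hlam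
    (by simp [h.eq_zero y hy]) (by simpa using h.frequently_ne_zero hy) hr₀ hrS hsmall hQ.neg hJ hJQ
  have hr₂ : lam * (9 * r) ^ 2 < 1 / 2 := by
    have : 1 / (16 * harnackConst E) ≤ 1 / (16 * 8) := by gcongr; exact eight_le_harnackConst
    linarith
  have hsep (k) (hk : k ∈ G) (l) (hl : l ∈ G) : r / J * |(k : ℝ) - l| ≤ dist (x k) (x l) := by
    have := abs_dist_sub_le (x k) (x l) y
    rwa [hdist k hk, hdist l hl, add_sub_add_left_eq_sub, ← sub_mul, mul_comm, abs_mul,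
      abs_of_pos (by positivity : 0 < r / J)] at this
  have hxR (k) (hk : k ∈ G) : dist (x k) x₀ ≤ 3 * r := by
    have : (k : ℝ) * (r / J) ≤ J * (r / J) := by
      gcongr; exact (Finset.mem_range.1 (hG hk)).le
    have : J * (r / J) = r := by field_simp
    linarith [dist_triangle (x k) y x₀, hdist k hk]
  linarith [h.card_le_mul_rpow_mul_log hE hf hlam hx₀ hr₀ hr₂ hmax hJ hG hsep hxR
    fun k hk z hz => neg_pos.1 (hneg k hk z hz)]

/-- The factor in the bound on `J ^ (-2 * e)` by `lam * r ^ 2`, in dimension `d`. The summand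
`1 / (2 * e + 3 - d)` is the price of absorbing a logarithm of `J`. -/
def shellCountConst (d e : ℝ) : ℝ := 2592 * 24 ^ (d - 2) * (1 + 1 / (2 * e + 3 - d))

lemma natCast_rpow_neg_le (h : IsPositiveDomain f Ω) (hE : 3 ≤ finrank ℝ E) {e : ℝ}
    (he : ((finrank ℝ E : ℝ) - 3) / 2 < e) (hf : IsLaplaceEigenfunction f lam) (hlam : 0 < lam)
    {x₀ y : E} (hx₀ : x₀ ∈ Ω) (hy : y ∈ frontier Ω) {r S Q : ℝ} (hr : dist y x₀ < r)
    (hrS : 2 * r ≤ S) (hsmall : lam * (2 * r) ^ 2 ≤ 1 / (16 * harnackConst E))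
    (hmax : ∀ z ∈ Ω, f z ≤ (1 + lam * (9 * r) ^ 2) * f x₀)
    (hQ : HasDoublingConstant f y S Q) {J : ℕ} (hJ : 0 < J)
    (hJQ : 2 * log (2 * harnackConst E * Q ^ 4) ≤ J * log (1 + 1 / (4 * harnackConst E))) :
    (J : ℝ) ^ (-(2 * e)) ≤ shellCountConst (finrank ℝ E) e * (lam * r ^ 2) := by
  have hJ₁ : (1 : ℝ) ≤ J := by exact_mod_cast hJ
  convert rpow_one_sub_le_of_le_mul_one_add_log (σ := 2 * e + 1) (by linarith) hJ₁ (by positivity)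
    (h.natCast_le_mul_rpow_mul_log hE hf hlam hx₀ hy hr hrS hsmall hmax hQ hJ hJQ) using 1
  · congr 1; ring
  · rw [shellCountConst]; ring

theorem exists_mul_rpow_neg_le (E : Type*) [NormedAddCommGroup E] [InnerProductSpace ℝ E]
    [FiniteDimensional ℝ E] (hE : 3 ≤ finrank ℝ E) {e : ℝ}
    (he : ((finrank ℝ E : ℝ) - 3) / 2 < e) :
    ∃ a > 0, ∀ {f : E → ℝ} {Ω : Set E} {lam : ℝ}, IsPositiveDomain f Ω →
      IsLaplaceEigenfunction f lam → 0 < lam → ∀ {x₀ y : E}, x₀ ∈ Ω → y ∈ frontier Ω →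
      ∀ {r N : ℝ}, dist y x₀ < r → (∀ z ∈ Ω, f z ≤ (1 + lam * (9 * r) ^ 2) * f x₀) →
      HasDoublingConstant f y (1 / (8 * harnackConst E) * lam ^ (-(1 : ℝ) / 2)) (exp (N / 2)) →
      a * lam ^ (-(1 : ℝ) / 2) * N ^ (-e) ≤ r := by
  set C := harnackConst E
  have hC : 8 ≤ C := eight_le_harnackConst
  obtain ⟨A, hA, hshells⟩ := exists_nat_mul_ge_log_mul_exp (2 * C) (η := log (1 + 1 / (4 * C)))
    (Real.log_pos (lt_add_of_pos_right 1 (by positivity)))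
  set K := shellCountConst (finrank ℝ E) e
  have hK : 0 < K := by
    have : 0 < 2 * e + 3 - (finrank ℝ E : ℝ) := by linarith
    simp only [K, shellCountConst]
    positivity
  refine ⟨min (1 / (16 * C)) (A ^ (-e) / √K), by positivity, ?_⟩
  intro f Ω lam h hf hlam x₀ y hx₀ hy r N hr hmax hN
  have hr₀ : 0 < r := dist_nonneg.trans_lt hr
  have hE' : (3 : ℝ) ≤ finrank ℝ E := by exact_mod_cast hE
  have he₀ : 0 ≤ e := by linarith
  set L := lam ^ (-(1 : ℝ) / 2)
  have : 0 < L := by positivity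
  have hN₁ : 1 ≤ N := h.one_le_of_hasDoublingConstant
    (hf.contDiff.differentiable two_ne_zero) hy (by positivity) hN
  rcases lt_or_ge (1 / (8 * C) * L) (2 * r) with hlarge | hsmall
  · calc min (1 / (16 * C)) (A ^ (-e) / √K) * L * N ^ (-e) ≤ 1 / (16 * C) * L * 1 := by
          gcongr
          exacts [min_le_left _ _, Real.rpow_le_one_of_one_le_of_nonpos hN₁ (by linarith)]
      _ = 1 / (8 * C) * L / 2 := by ring
      _ ≤ r := by linarith
  · obtain ⟨J, hJ, hJlog, hJN⟩ := hshells N hN₁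
    have hJK : (J : ℝ) ^ (-(2 * e)) ≤ K * (lam * r ^ 2) :=
      h.natCast_rpow_neg_le hE he hf hlam hx₀ hy hr hsmall
        (mul_sq_le_of_le_mul_rpow_neg_half hlam (by linarith) (by positivity) hsmall)
        hmax hN hJ hJlog
    calc min (1 / (16 * C)) (A ^ (-e) / √K) * L * N ^ (-e) ≤ A ^ (-e) / √K * L * N ^ (-e) := by
          gcongr; exact min_le_right _ _
      _ ≤ r := rpow_neg_mul_le_of_rpow_neg_le hA (by positivity) (by exact_mod_cast hJ) hJN hK hlam
          hr₀.le he₀ hJK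

end IsPositiveDomain

end PositiveDomain

section NodalDomain

namespace IsPositiveDomain

variable {E : Type*} [NormedAddCommGroup E] [InnerProductSpace ℝ E] [FiniteDimensional ℝ E]
  {f : E → ℝ} {Ω : Set E} {lam : ℝ}

lemma bddAbove_radii (h : IsPositiveDomain f Ω) (hf : IsLaplaceEigenfunction f lam)
    (hlam : 0 < lam) : BddAbove {ρ : ℝ | 0 < ρ ∧ ∃ c, ball c ρ ⊆ Ω} := by
  have hR : 0 < (finrank ℝ E + 2) / √lam := by positivity
  refine ⟨(finrank ℝ E + 2) / √lam, ?_⟩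
  rintro ρ ⟨-, c, hc⟩
  by_contra! hlt
  refine hf.not_pos_on_closedBall c hR ?_ fun z hz => h.pos z (hc (closedBall_subset_ball hlt hz))
  rw [div_pow, Real.sq_sqrt hlam.le, mul_div_cancel₀ _ hlam.ne']
  exact lt_two_mul_self (by positivity)

theorem exists_mul_rpow_neg_le_of_not_ball_subset (E : Type*) [NormedAddCommGroup E]
    [InnerProductSpace ℝ E] [FiniteDimensional ℝ E] (hE : 3 ≤ finrank ℝ E) {e : ℝ}
    (he : ((finrank ℝ E : ℝ) - 3) / 2 < e) :
    ∃ a > 0, ∀ {f : E → ℝ} {Ω : Set E} {lam : ℝ}, IsPositiveDomain f Ω → Ω.Nonempty →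
      BddAbove (f '' Ω) → IsLaplaceEigenfunction f lam → 0 < lam →
      ∀ {r N : ℝ}, (∀ c, ¬ ball c r ⊆ Ω) →
      (∀ y ∈ frontier Ω,
        HasDoublingConstant f y (1 / (8 * harnackConst E) * lam ^ (-(1 : ℝ) / 2)) (exp (N / 2))) →
      a * lam ^ (-(1 : ℝ) / 2) * N ^ (-e) ≤ r := by
  obtain ⟨a, ha, hbound⟩ := exists_mul_rpow_neg_le E hE he
  refine ⟨a, ha, fun {f Ω lam} h hΩ hbdd hf hlam r N hball hN => ?_⟩
  have hr : 0 < r := not_le.1 fun hr => hball 0 (by simp [ball_eq_empty.2 hr])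
  have hle (z) (hz : z ∈ Ω) : f z ≤ sSup (f '' Ω) := le_csSup hbdd (mem_image_of_mem f hz)
  have hsup : 0 < sSup (f '' Ω) := hΩ.elim fun z hz => (h.pos z hz).trans_le (hle z hz)
  obtain ⟨-, ⟨x₀, hx₀, rfl⟩, hx₀sup⟩ := exists_lt_of_lt_csSup (hΩ.image f)
    (div_lt_self hsup (lt_add_of_pos_right 1 (by positivity : 0 < lam * (9 * r) ^ 2)))
  have hmax (z) (hz : z ∈ Ω) : f z ≤ (1 + lam * (9 * r) ^ 2) * f x₀ :=
    (hle z hz).trans ((div_lt_iff₀' (by positivity)).1 hx₀sup).le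
  obtain ⟨z, hz, hzΩ⟩ := not_subset.1 (hball x₀)
  obtain ⟨y, hy, hdist⟩ := exists_mem_frontier_infDist_compl_eq_dist hx₀
    (ne_univ_iff_exists_notMem Ω |>.2 ⟨z, hzΩ⟩)
  have hyr : dist y x₀ < r := by
    rw [dist_comm, ← hdist]
    exact (infDist_le_dist_of_mem hzΩ).trans_lt (mem_ball'.1 hz)
  exact hbound h hf hlam hx₀ hy hyr hmax (hN y hy)

end IsPositiveDomain

section ConnectedComponent

variable {X : Type*} [TopologicalSpace X] {f : X → ℝ} {p : X}

lemma eq_zero_of_mem_frontier_connectedComponentIn [LocallyConnectedSpace X] (hf : Continuous f)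
    (hp : f p ≠ 0) {z : X} (hz : z ∈ frontier (connectedComponentIn {y | f y ≠ 0} p)) :
    f z = 0 := by
  by_contra hne
  have hpre : IsPreconnected (insert z (connectedComponentIn {y | f y ≠ 0} p)) :=
    isPreconnected_connectedComponentIn.subset_closure (subset_insert _ _)
      (insert_subset hz.1 subset_closure)
  have hmem : z ∈ connectedComponentIn {y | f y ≠ 0} p :=
    hpre.subset_connectedComponentIn (mem_insert_of_mem _ (mem_connectedComponentIn hp))
      (insert_subset hne (connectedComponentIn_subset _ _)) (mem_insert _ _)
  rw [(isOpen_ne_fun hf continuous_const).connectedComponentIn.frontier_eq] at hz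
  exact hz.2 hmem

lemma isPositiveDomain_connectedComponentIn [LocallyConnectedSpace X] (hf : Continuous f)
    (hp : 0 < f p) : IsPositiveDomain f (connectedComponentIn {y | f y ≠ 0} p) where
  isOpen := (isOpen_ne_fun hf continuous_const).connectedComponentIn
  pos z hz := by
    by_contra! hneg
    obtain ⟨w, hw, hw₀⟩ := isPreconnected_connectedComponentIn.intermediate_value hz
      (mem_connectedComponentIn hp.ne') hf.continuousOn ⟨hneg, hp.le⟩
    exact connectedComponentIn_subset _ _ hw hw₀
  eq_zero _ := eq_zero_of_mem_frontier_connectedComponentIn hf hp.ne'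

end ConnectedComponent

variable {n : ℕ} {ψ : EuclideanSpace ℝ (Fin n) → ℝ} {Ω : Set (EuclideanSpace ℝ (Fin n))}

namespace IsNodalDomain

lemma nonempty (h : IsNodalDomain ψ Ω) : Ω.Nonempty := by
  obtain ⟨p, hp, rfl⟩ := h
  exact ⟨p, mem_connectedComponentIn hp⟩

lemma isPositiveDomain_or_neg (h : IsNodalDomain ψ Ω) (hψ : Continuous ψ) :
    IsPositiveDomain ψ Ω ∨ IsPositiveDomain (-ψ) Ω := by
  obtain ⟨p, hp, rfl⟩ := h
  rcases hp.lt_or_gt with hneg | hpos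
  · right
    simpa using isPositiveDomain_connectedComponentIn hψ.neg (neg_pos.2 hneg)
  · exact .inl (isPositiveDomain_connectedComponentIn hψ hpos)

end IsNodalDomain

lemma innerRadius_nonneg (Ω : Set (EuclideanSpace ℝ (Fin n))) : 0 ≤ innerRadius Ω :=
  Real.sSup_nonneg fun _ hρ => hρ.1.le

theorem IsPositiveDomain.exists_mul_rpow_neg_le_innerRadius (n : ℕ) (hn : 3 ≤ n) {e : ℝ}
    (he : ((n : ℝ) - 3) / 2 < e) :
    ∃ a > 0, ∀ {f : EuclideanSpace ℝ (Fin n) → ℝ} {Ω : Set (EuclideanSpace ℝ (Fin n))} {lam : ℝ},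
      IsPositiveDomain f Ω → Ω.Nonempty → BddAbove (f '' Ω) →
      IsLaplaceEigenfunction f lam → 0 < lam → ∀ {N : ℝ},
      (∀ y ∈ frontier Ω, HasDoublingConstant f y
        (1 / (8 * harnackConst (EuclideanSpace ℝ (Fin n))) * lam ^ (-(1 : ℝ) / 2))
        (exp (N / 2))) →
      a * lam ^ (-(1 : ℝ) / 2) * N ^ (-e) ≤ innerRadius Ω := by
  have hfinrank : finrank ℝ (EuclideanSpace ℝ (Fin n)) = n := finrank_euclideanSpace_fin
  obtain ⟨a, ha, hbound⟩ := exists_mul_rpow_neg_le_of_not_ball_subset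
    (EuclideanSpace ℝ (Fin n)) (e := e) (by rwa [hfinrank]) (by rwa [hfinrank])
  refine ⟨a, ha, fun {f Ω lam} h hne hbdd hf hlam {N} hN => ?_⟩
  refine le_of_forall_gt_imp_ge_of_dense fun r hr =>
    hbound h hne hbdd hf hlam (fun c hc => ?_) hN
  have hr₀ : 0 < r := (innerRadius_nonneg Ω).trans_lt hr
  exact hr.not_ge (le_csSup (h.bddAbove_radii hf hlam) ⟨hr₀, c, hc⟩)

lemma ZnPeriodic.isBounded_range (hψ : ZnPeriodic n ψ) (hcont : Continuous ψ) :
    Bornology.IsBounded (range ψ) := by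
  have hK : IsCompact (WithLp.toLp 2 '' univ.pi fun _ : Fin n => Icc (0 : ℝ) 1) :=
    (isCompact_univ_pi fun _ => isCompact_Icc).image (PiLp.continuous_toLp 2 _)
  refine (hK.image hcont).isBounded.subset ?_
  rintro - ⟨x, rfl⟩
  refine ⟨_, ⟨fun i => Int.fract (x i), fun i _ => ⟨Int.fract_nonneg _, (Int.fract_lt_one _).le⟩,
    rfl⟩, ?_⟩
  rw [← hψ x fun i => -⌊x i⌋]
  congr! 3
  simp [Int.fract, sub_eq_add_neg]

end NodalDomain

lemma mul_sSup_rpow_le {S : Set ℝ} {a e r : ℝ} (he : e ≠ 0) (hr : 0 ≤ r)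
    (h : ∀ N ∈ upperBounds S, a * N ^ e ≤ r) : a * sSup S ^ e ≤ r := by
  by_cases hS : BddAbove S
  · exact h _ fun _ => le_csSup hS
  · -- Here `sSup S` has the junk value `0`, and so has its power.
    rwa [Real.sSup_of_not_bddAbove hS, Real.zero_rpow he, mul_zero]

theorem inner_radius_from_doubling_index_general (n : ℕ) (hn : 3 ≤ n) {e : ℝ}
    (he : ((n : ℝ) - 3) / 2 < e) :
    ∃ ε₀ a : ℝ, ε₀ ∈ Ioo (0 : ℝ) 1 ∧ 0 < a ∧
      ∀ (ψ : EuclideanSpace ℝ (Fin n) → ℝ) (lam : ℝ), 0 < lam → ContDiff ℝ 2 ψ →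
        (∀ x, lap n ψ x = -lam * ψ x) →
        ∀ Ω, IsNodalDomain ψ Ω → Bornology.IsBounded (ψ '' Ω) → ∀ N : ℝ,
          (∀ x ∈ frontier Ω, ∀ s, 0 < s → s ≤ ε₀ * lam ^ (-(1 : ℝ) / 2) →
            log (sSup ((fun y => ψ y ^ 2) '' ball x (2 * s)) /
              sSup ((fun y => ψ y ^ 2) '' ball x s)) ≤ N) →
          a * lam ^ (-(1 : ℝ) / 2) * N ^ (-e) ≤ innerRadius Ω := by
  set C := harnackConst (EuclideanSpace ℝ (Fin n))
  have hC : 8 ≤ C := eight_le_harnackConst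
  obtain ⟨a, ha, hbound⟩ := IsPositiveDomain.exists_mul_rpow_neg_le_innerRadius n hn he
  refine ⟨1 / (8 * C), a, ⟨by positivity, (div_lt_one (by positivity)).2 (by linarith)⟩, ha, ?_⟩
  intro ψ lam hlam hψ heig Ω hΩ hbdd N hN
  have hf : IsLaplaceEigenfunction ψ lam := ⟨hψ, fun x => by rw [← lap_eq_laplacian hψ, heig]⟩
  have hdoubling {y} (hy : y ∈ frontier Ω) (hne : ∃ᶠ z in 𝓝 y, ψ z ≠ 0) :
      HasDoublingConstant ψ y (1 / (8 * C) * lam ^ (-(1 : ℝ) / 2)) (exp (N / 2)) :=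
    hasDoublingConstant_exp_half hf.continuous hne (hN y hy)
  rcases hΩ.isPositiveDomain_or_neg hf.continuous with h | h
  · exact hbound h hΩ.nonempty hbdd.bddAbove hf hlam
      fun y hy => hdoubling hy (h.frequently_ne_zero hy)
  · refine hbound h hΩ.nonempty ?_ hf.neg hlam fun y hy =>
      (hdoubling hy (by simpa using h.frequently_ne_zero hy)).neg
    simpa only [← image_neg_eq_neg, image_image] using! hbdd.neg.bddAbove

theorem inner_radius_from_doubling_index
    (n : ℕ) (hn : 3 ≤ n) :
    ∃ ε₀ a₅ : ℝ, ε₀ ∈ Set.Ioo (0:ℝ) 1 ∧ 0 < a₅ ∧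
      ∀ (ψ : EuclideanSpace ℝ (Fin n) → ℝ) (lam : ℝ),
        1 ≤ lam → ContDiff ℝ (⊤ : ℕ∞) ψ → ZnPeriodic n ψ →
        (∀ x, lap n ψ x = -lam * ψ x) → (∃ x, ψ x ≠ 0) →
        ∀ Ω, IsNodalDomain ψ Ω →
          a₅ * lam ^ (-(1:ℝ)/2) *
            (sSup {t : ℝ | ∃ (x : EuclideanSpace ℝ (Fin n)) (s : ℝ),
                0 < s ∧ s ≤ ε₀ * lam ^ (-(1:ℝ)/2) ∧
                t = Real.log (sSup ((fun y => (ψ y)^2) '' Metric.ball x (2*s)) /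
                      sSup ((fun y => (ψ y)^2) '' Metric.ball x s))})
              ^ (-(((n:ℝ)-1)*((n:ℝ)-2))/(2*(n:ℝ)))
            ≤ innerRadius Ω := by
  have hn₀ : (3 : ℝ) ≤ n := by exact_mod_cast hn
  set e : ℝ := ((n : ℝ) - 1) * ((n : ℝ) - 2) / (2 * (n : ℝ)) with he
  have hlt : ((n : ℝ) - 3) / 2 < e := by
    rw [he, div_lt_div_iff₀ (by positivity) (by positivity)]
    linarith
  obtain ⟨ε₀, a₅, hε₀, ha₅, hbound⟩ := inner_radius_from_doubling_index_general n hn hlt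
  refine ⟨ε₀, a₅, hε₀, ha₅, fun ψ lam hlam hψ hper heig _ Ω hΩ => ?_⟩
  rw [neg_div (2 * (n : ℝ)), ← he]
  refine mul_sSup_rpow_le (neg_ne_zero.2 (by linarith : 0 < e).ne') (innerRadius_nonneg Ω)
    fun N hN => ?_
  exact hbound ψ lam (by linarith) (contDiff_infty.1 hψ 2) heig Ω hΩ
    ((hper.isBounded_range hψ.continuous).subset (image_subset_range _ _)) N
    fun x _ s hs hsε => hN ⟨x, s, hs, hsε, rfl⟩
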